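/- arXiv:1303.1770 — 6 statements merged into one kernel-verified Lean document; each statement's English description precedes it below -/
import Mathlib

section
/- Let μ : 𝒜 → H be an orthogonally scattered vector measure (⟨μ(X), μ(Y)⟩ = 0 for disjoint X, Y ∈ 𝒜) and let λ be the finite positive measure λ(X) := ‖μ(X)‖². For a measurable function f : Ω → ℂ the following are equivalent: (i) ∫ |f|² dλ < ∞; (ii) for every y ∈ H, f is integrable with respect to the complex measure μ_y(X) := ⟨y, μ(X)⟩, and there exists a vector v ∈ H such that ⟨y, v⟩ = ∫ f dμ_y for all y ∈ H. In that case ‖v‖² = ∫ |f|² dλ. -/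
/-! The map `1_X ↦ μ X` extends to a linear isometry `T : L²(λ) → H`: orthogonality of the values
of `μ` on disjoint sets is exactly Pythagoras for simple functions (`exists_wienerIsometry`).
Since `⟪y, μ X⟫ = ⟪T† y, 1_X⟫`, the complex measure `⟪y, μ ·⟫` has density `conj (T† y)` with
respect to `λ`, and integrals against it are integrals against `λ` with that weight
(`cmIntegrable_iff_of_density`, `cmIntegral_of_density`).

If `f ∈ L²(λ)`, Hölder gives integrability and `v = T f` represents the integral, so
`‖v‖ = ‖f‖`. Conversely, let `v` represent the integral and test it on `y = μ X = T 1_X`, for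
which `T† y = 1_X`: the outcome is that `f` is `λ`-integrable and `∫_X f = ∫_X T† v` for every
measurable `X`, so `f = T† v` almost everywhere and `f ∈ L²(λ)`. -/

open MeasureTheory ComplexConjugate Filter
open scoped ComplexInnerProductSpace ENNReal NNReal

/-- Integral of a complex-valued function with respect to a signed measure, defined via the
Jordan decomposition. -/
noncomputable def smIntegral {Ω : Type*} [MeasurableSpace Ω] (s : SignedMeasure Ω)
    (f : Ω → ℂ) : ℂ :=
  (∫ ω, f ω ∂s.toJordanDecomposition.posPart) - ∫ ω, f ω ∂s.toJordanDecomposition.negPart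

/-- The total variation control measure of a complex measure (the sum of the total variations
of the real and imaginary parts; a function is integrable for this measure iff it is integrable
for the total variation measure `|ν|`, and for a positive measure it coincides with it). -/
noncomputable def cmVariation {Ω : Type*} [MeasurableSpace Ω] (ν : ComplexMeasure Ω) :
    Measure Ω :=
  (ComplexMeasure.re ν).totalVariation + (ComplexMeasure.im ν).totalVariation

/-- `f` is integrable with respect to the complex measure `ν`, i.e. `∫ |f| d|ν| < ∞`. -/
def CMIntegrable {Ω : Type*} [MeasurableSpace Ω] (ν : ComplexMeasure Ω) (f : Ω → ℂ) : Prop :=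
  Integrable f (cmVariation ν)

/-- The integral `∫ f dν` of a complex function with respect to a complex measure, via the
Jordan decompositions of the real and imaginary parts of `ν`. -/
noncomputable def cmIntegral {Ω : Type*} [MeasurableSpace Ω] (ν : ComplexMeasure Ω)
    (f : Ω → ℂ) : ℂ :=
  smIntegral (ComplexMeasure.re ν) f + Complex.I * smIntegral (ComplexMeasure.im ν) f

/-- The complex measure `X ↦ ⟨y, μ(X)⟩` associated with a Hilbert space valued vector
measure `μ` and a vector `y`. -/
noncomputable def vmInner {Ω : Type*} [MeasurableSpace Ω] {H : Type*} [NormedAddCommGroup H]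
    [InnerProductSpace ℂ H] (μ : VectorMeasure Ω H) (y : H) : ComplexMeasure Ω :=
  μ.mapRange (innerSL ℂ y).toLinearMap.toAddMonoidHom (innerSL ℂ y).continuous

/-! ### Signed measures with a density -/

section SignedDensity

variable {Ω : Type*} [MeasurableSpace Ω] {lam : Measure Ω}

/-- The Jordan decomposition of a signed measure with density `h` is `h⁺ lam`, `h⁻ lam`. -/
lemma jordan_of_density {s : SignedMeasure Ω} {h : Ω → ℝ} (hm : Measurable h)
    (hi : Integrable h lam) (hs : ∀ X, MeasurableSet X → s X = ∫ ω in X, h ω ∂lam) :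
    s.toJordanDecomposition.posPart = lam.withDensity (fun ω => ENNReal.ofReal (h ω)) ∧
    s.toJordanDecomposition.negPart = lam.withDensity (fun ω => ENNReal.ofReal (-h ω)) := by
  have hs' : s = 0 + lam.withDensityᵥ h := by
    ext X hX
    rw [zero_add, withDensityᵥ_apply hi hX, hs X hX]
  have := SignedMeasure.toJordanDecomposition_eq_of_eq_add_withDensity hm hi
    VectorMeasure.MutuallySingular.zero_left hs'
  rw [this]
  simp [SignedMeasure.toJordanDecomposition_zero]

lemma integrable_totalVariation_iff {s : SignedMeasure Ω} {h : Ω → ℝ} (hm : Measurable h)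
    (hi : Integrable h lam) (hs : ∀ X, MeasurableSet X → s X = ∫ ω in X, h ω ∂lam)
    {f : Ω → ℂ} (hf : Measurable f) :
    Integrable f s.totalVariation ↔ Integrable (fun ω => (h ω : ℂ) * f ω) lam := by
  obtain ⟨h1, h2⟩ := jordan_of_density hm hi hs
  rw [SignedMeasure.totalVariation, h1, h2, integrable_add_measure,
    integrable_withDensity_iff_integrable_smul' (by fun_prop) (by simp),
    integrable_withDensity_iff_integrable_smul' (by fun_prop) (by simp)]
  simp only [ENNReal.toReal_ofReal', Complex.real_smul]
  constructor
  · rintro ⟨ha, hb⟩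
    refine (ha.sub hb).congr (.of_forall fun ω => ?_)
    simp only [Pi.sub_apply]
    rw [← sub_mul, ← Complex.ofReal_sub]
    congr 2
    exact max_zero_sub_max_neg_zero_eq_self _
  · intro ha
    constructor <;>
    · refine ha.mono (by fun_prop) (.of_forall fun ω => ?_)
      simp only [norm_mul, Complex.norm_real, Real.norm_eq_abs]
      refine mul_le_mul_of_nonneg_right ?_ (norm_nonneg _)
      rw [abs_of_nonneg (le_max_right _ _)]
      exact max_le (by first | exact le_abs_self _ | exact neg_le_abs _) (abs_nonneg _)

lemma smIntegral_of_density {s : SignedMeasure Ω} {h : Ω → ℝ} (hm : Measurable h)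
    (hi : Integrable h lam) (hs : ∀ X, MeasurableSet X → s X = ∫ ω in X, h ω ∂lam)
    {f : Ω → ℂ} (hf : Integrable f s.totalVariation) :
    smIntegral s f = ∫ ω, (h ω : ℂ) * f ω ∂lam := by
  obtain ⟨h1, h2⟩ := jordan_of_density hm hi hs
  rw [SignedMeasure.totalVariation, h1, h2, integrable_add_measure,
    integrable_withDensity_iff_integrable_smul' (by fun_prop) (by simp),
    integrable_withDensity_iff_integrable_smul' (by fun_prop) (by simp)] at hf
  rw [smIntegral, h1, h2, integral_withDensity_eq_integral_toReal_smul (by fun_prop) (by simp),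
    integral_withDensity_eq_integral_toReal_smul (by fun_prop) (by simp),
    ← integral_sub hf.1 hf.2]
  refine integral_congr_ae (.of_forall fun ω => ?_)
  simp only [ENNReal.toReal_ofReal', Complex.real_smul]
  rw [← sub_mul, ← Complex.ofReal_sub]
  congr 2
  exact max_zero_sub_max_neg_zero_eq_self _

end SignedDensity

/-! ### Complex measures with a density -/

section ComplexDensity

variable {Ω : Type*} [MeasurableSpace Ω] {lam : Measure Ω}
  {ν : ComplexMeasure Ω} {h : Ω → ℂ}

lemma re_density (hi : Integrable h lam) (hs : ∀ X, MeasurableSet X → ν X = ∫ ω in X, h ω ∂lam)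
    (X : Set Ω) (hX : MeasurableSet X) :
    ComplexMeasure.re ν X = ∫ ω in X, (h ω).re ∂lam := by
  have : ComplexMeasure.re ν X = (ν X).re := rfl
  rw [this, hs X hX]
  exact (integral_re hi.restrict).symm

lemma im_density (hi : Integrable h lam) (hs : ∀ X, MeasurableSet X → ν X = ∫ ω in X, h ω ∂lam)
    (X : Set Ω) (hX : MeasurableSet X) :
    ComplexMeasure.im ν X = ∫ ω in X, (h ω).im ∂lam := by
  have : ComplexMeasure.im ν X = (ν X).im := rfl
  rw [this, hs X hX]
  exact (integral_im hi.restrict).symm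

lemma cmIntegrable_iff_of_density (hm : Measurable h) (hi : Integrable h lam)
    (hs : ∀ X, MeasurableSet X → ν X = ∫ ω in X, h ω ∂lam) {f : Ω → ℂ} (hf : Measurable f) :
    CMIntegrable ν f ↔ Integrable (fun ω => h ω * f ω) lam := by
  rw [CMIntegrable, cmVariation, integrable_add_measure,
    integrable_totalVariation_iff (by fun_prop) hi.re (re_density hi hs) hf,
    integrable_totalVariation_iff (by fun_prop) hi.im (im_density hi hs) hf]
  constructor
  · rintro ⟨ha, hb⟩
    refine (ha.add (hb.const_mul Complex.I)).congr (.of_forall fun ω => ?_)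
    simp only [Pi.add_apply]
    nth_rewrite 3 [← Complex.re_add_im (h ω)]
    simp only [RCLike.re_eq_complex_re, RCLike.im_eq_complex_im]
    ring
  · intro ha
    constructor
    · refine ha.mono (by fun_prop) (.of_forall fun ω => ?_)
      simp only [norm_mul, Complex.norm_real, Real.norm_eq_abs]
      gcongr
      exact Complex.abs_re_le_norm _
    · refine ha.mono (by fun_prop) (.of_forall fun ω => ?_)
      simp only [norm_mul, Complex.norm_real, Real.norm_eq_abs]
      gcongr
      exact Complex.abs_im_le_norm _

lemma cmIntegral_of_density (hm : Measurable h) (hi : Integrable h lam)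
    (hs : ∀ X, MeasurableSet X → ν X = ∫ ω in X, h ω ∂lam) {f : Ω → ℂ} (hf : Measurable f)
    (hfi : CMIntegrable ν f) :
    cmIntegral ν f = ∫ ω, h ω * f ω ∂lam := by
  rw [CMIntegrable, cmVariation, integrable_add_measure] at hfi
  have ha := (integrable_totalVariation_iff (by fun_prop) hi.re (re_density hi hs) hf).1 hfi.1
  have hb := (integrable_totalVariation_iff (by fun_prop) hi.im (im_density hi hs) hf).1 hfi.2
  rw [cmIntegral, smIntegral_of_density (by fun_prop) hi.re (re_density hi hs) hfi.1,
    smIntegral_of_density (by fun_prop) hi.im (im_density hi hs) hfi.2,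
    ← integral_const_mul, ← integral_add ha (hb.const_mul Complex.I)]
  refine integral_congr_ae (.of_forall fun ω => ?_)
  simp only
  nth_rewrite 3 [← Complex.re_add_im (h ω)]
  simp only [RCLike.re_eq_complex_re, RCLike.im_eq_complex_im]
  ring

end ComplexDensity

/-! ### The isometry from `L²` induced by an orthogonally scattered measure -/

section Isometry

variable {Ω : Type*} [MeasurableSpace Ω] {H : Type*} [NormedAddCommGroup H]
  [InnerProductSpace ℂ H]

/-- `X ↦ (c ↦ c • μ X)`, the operator-valued set function whose integral on simple functions
is `∑ c, c • μ (s ⁻¹' {c})`. -/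
noncomputable def smulSet (μ : VectorMeasure Ω H) (X : Set Ω) : ℂ →L[ℝ] H :=
  (ContinuousLinearMap.toSpanSingleton ℂ (μ X)).restrictScalars ℝ

@[simp] lemma smulSet_apply (μ : VectorMeasure Ω H) (X : Set Ω) (c : ℂ) :
    smulSet μ X c = c • μ X := rfl

lemma smulSet_finMeasAdditive (μ : VectorMeasure Ω H) (lam : Measure Ω) :
    FinMeasAdditive lam (smulSet μ) := by
  intro s t hs ht _ _ hd
  ext
  simp [VectorMeasure.of_union hd hs ht]

/-- The integral of complex simple functions against `μ`. -/
noncomputable def simpleIntegral (μ : VectorMeasure Ω H) (lam : Measure Ω) [IsFiniteMeasure lam] :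
    SimpleFunc Ω ℂ →ₗ[ℂ] H where
  toFun s := s.setToSimpleFunc (smulSet μ)
  map_add' s t := SimpleFunc.setToSimpleFunc_add _ (smulSet_finMeasAdditive μ lam)
    (SimpleFunc.integrable_of_isFiniteMeasure s) (SimpleFunc.integrable_of_isFiniteMeasure t)
  map_smul' c s := SimpleFunc.setToSimpleFunc_smul _ (smulSet_finMeasAdditive μ lam)
    (fun c s x => by simp [mul_smul]) c (SimpleFunc.integrable_of_isFiniteMeasure s)

/-- The class in `L²(lam)` of a complex simple function. -/
noncomputable def simpleToL2 (lam : Measure Ω) [IsFiniteMeasure lam] :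
    SimpleFunc Ω ℂ →ₗ[ℂ] Lp ℂ 2 lam where
  toFun s := (s.memLp_of_isFiniteMeasure 2 lam).toLp s
  map_add' _ _ := rfl
  map_smul' _ _ := rfl

lemma simpleToL2_denseRange (lam : Measure Ω) [IsFiniteMeasure lam] :
    DenseRange (simpleToL2 lam) := by
  have hd := Lp.simpleFunc.denseRange (E := ℂ) (p := 2) (μ := lam) (by simp)
  refine hd.mono ?_
  rintro _ ⟨g, rfl⟩
  refine ⟨Lp.simpleFunc.toSimpleFunc g, ?_⟩
  conv_rhs => rw [← Lp.simpleFunc.toLp_toSimpleFunc g]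
  rfl

lemma norm_sq_toLp_two {lam : Measure Ω} {f : Ω → ℂ} (hf : MemLp f 2 lam) :
    ‖hf.toLp f‖ ^ 2 = ∫ ω, ‖f ω‖ ^ 2 ∂lam := by
  have h : (⟪hf.toLp f, hf.toLp f⟫ : ℂ) = ∫ ω, ((‖f ω‖ ^ 2 : ℝ) : ℂ) ∂lam := by
    rw [L2.inner_def]
    refine integral_congr_ae ?_
    filter_upwards [hf.coeFn_toLp] with ω hω
    rw [hω, inner_self_eq_norm_sq_to_K]
    simp
  rw [inner_self_eq_norm_sq_to_K, integral_complex_ofReal] at h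
  exact Complex.ofReal_injective (by simpa using h)

/-- Pythagoras: the cross terms vanish since distinct fibres are disjoint. -/
lemma norm_simpleIntegral (μ : VectorMeasure Ω H)
    (horth : ∀ X Y : Set Ω, MeasurableSet X → MeasurableSet Y → Disjoint X Y →
      ⟪μ X, μ Y⟫ = (0 : ℂ))
    (lam : Measure Ω) [IsFiniteMeasure lam]
    (hlam : ∀ X : Set Ω, MeasurableSet X → lam X = ENNReal.ofReal (‖μ X‖ ^ 2))
    (s : SimpleFunc Ω ℂ) : ‖simpleIntegral μ lam s‖ = ‖simpleToL2 lam s‖ := by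
  rw [← sq_eq_sq₀ (norm_nonneg _) (norm_nonneg _)]
  have h1 : ‖simpleToL2 lam s‖ ^ 2 = ∑ c ∈ s.range, ‖μ (s ⁻¹' {c})‖ ^ 2 * ‖c‖ ^ 2 := by
    have h := SimpleFunc.map_integral (μ := lam) s (fun c : ℂ => ‖c‖ ^ 2)
      (SimpleFunc.integrable_of_isFiniteMeasure s) (by simp)
    rw [SimpleFunc.integral_eq_integral _ (SimpleFunc.integrable_of_isFiniteMeasure _)] at h
    refine (norm_sq_toLp_two (s.memLp_of_isFiniteMeasure 2 lam)).trans (h.trans ?_)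
    refine Finset.sum_congr rfl fun c _ => ?_
    rw [measureReal_def, hlam _ (s.measurableSet_fiber c), ENNReal.toReal_ofReal (by positivity),
      smul_eq_mul]
  have h2 : simpleIntegral μ lam s = ∑ c ∈ s.range, c • μ (s ⁻¹' {c}) := rfl
  rw [h1, h2]
  have h3 : (⟪∑ c ∈ s.range, c • μ (s ⁻¹' {c}), ∑ c ∈ s.range, c • μ (s ⁻¹' {c})⟫ : ℂ) =
      ∑ c ∈ s.range, ((‖μ (s ⁻¹' {c})‖ ^ 2 * ‖c‖ ^ 2 : ℝ) : ℂ) := by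
    rw [sum_inner]
    refine Finset.sum_congr rfl fun c hc => ?_
    rw [inner_sum, Finset.sum_eq_single_of_mem c hc]
    · rw [inner_self_eq_norm_sq_to_K, norm_smul]
      push_cast
      simp only [RCLike.ofReal_eq_complex_ofReal]
      ring
    · intro d _ hdc
      rw [inner_smul_left, inner_smul_right, horth _ _ (s.measurableSet_fiber c)
        (s.measurableSet_fiber d), mul_zero, mul_zero]
      exact Disjoint.preimage _ (by simpa using hdc.symm)
  rw [inner_self_eq_norm_sq_to_K, ← Complex.ofReal_sum] at h3
  exact Complex.ofReal_injective (by simpa using h3)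

/-- The isometric extension `L²(lam) → H` of `1_X ↦ μ X`. -/
lemma exists_wienerIsometry [CompleteSpace H] (μ : VectorMeasure Ω H)
    (horth : ∀ X Y : Set Ω, MeasurableSet X → MeasurableSet Y → Disjoint X Y →
      ⟪μ X, μ Y⟫ = (0 : ℂ))
    (lam : Measure Ω) [IsFiniteMeasure lam]
    (hlam : ∀ X : Set Ω, MeasurableSet X → lam X = ENNReal.ofReal (‖μ X‖ ^ 2)) :
    ∃ T : Lp ℂ 2 lam →ₗᵢ[ℂ] H, ∀ (X : Set Ω) (hX : MeasurableSet X),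
      T (indicatorConstLp 2 hX (measure_ne_top lam X) 1) = μ X := by
  have hd := simpleToL2_denseRange lam
  have hn := norm_simpleIntegral μ horth lam hlam
  have hb : ∃ C, ∀ s, ‖simpleIntegral μ lam s‖ ≤ C * ‖simpleToL2 lam s‖ :=
    ⟨1, fun s => by rw [hn s, one_mul]⟩
  have he := LinearMap.extendOfNorm_eq hd hb
  refine ⟨⟨((simpleIntegral μ lam).extendOfNorm (simpleToL2 lam)).toLinearMap, fun g => ?_⟩,
    fun X hX => ?_⟩
  · refine hd.induction_on (p := fun g =>
      ‖(simpleIntegral μ lam).extendOfNorm (simpleToL2 lam) g‖ = ‖g‖) g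
      (isClosed_eq (by fun_prop) (by fun_prop)) fun s => ?_
    rw [he, hn]
  · have h1 : indicatorConstLp 2 hX (measure_ne_top lam X) (1 : ℂ) = simpleToL2 lam
        (SimpleFunc.piecewise X hX (SimpleFunc.const Ω 1) (SimpleFunc.const Ω 0)) := by
      refine (MemLp.toLp_eq_toLp_iff _ (SimpleFunc.memLp_of_isFiniteMeasure _ 2 lam)).2 (.of_forall fun ω => ?_)
      simp [Set.indicator, Set.piecewise]
    change (simpleIntegral μ lam).extendOfNorm (simpleToL2 lam) _ = _
    rw [h1, he]
    refine (SimpleFunc.setToSimpleFunc_indicator (smulSet μ) ?_ hX 1).trans (by simp)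
    ext; simp

end Isometry

/-! ### Integrability and square integrability -/

theorem stmt_1 {Ω : Type*} [MeasurableSpace Ω] {H : Type*} [NormedAddCommGroup H]
    [InnerProductSpace ℂ H] [CompleteSpace H] (μ : VectorMeasure Ω H)
    (horth : ∀ X Y : Set Ω, MeasurableSet X → MeasurableSet Y → Disjoint X Y →
      ⟪μ X, μ Y⟫ = (0 : ℂ))
    (lam : Measure Ω) [IsFiniteMeasure lam]
    (hlam : ∀ X : Set Ω, MeasurableSet X → lam X = ENNReal.ofReal (‖μ X‖ ^ 2))
    (f : Ω → ℂ) (hf : Measurable f) :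
    ((Integrable (fun ω => ‖f ω‖ ^ 2) lam) ↔
      ((∀ y : H, CMIntegrable (vmInner μ y) f) ∧
        ∃ v : H, ∀ y : H, ⟪y, v⟫ = cmIntegral (vmInner μ y) f)) ∧
    ((∀ y : H, CMIntegrable (vmInner μ y) f) →
      ∀ v : H, (∀ y : H, ⟪y, v⟫ = cmIntegral (vmInner μ y) f) →
        ‖v‖ ^ 2 = ∫ ω, ‖f ω‖ ^ 2 ∂lam) := by
  obtain ⟨T, hT⟩ := exists_wienerIsometry μ horth lam hlam
  let A : H →L[ℂ] Lp ℂ 2 lam := ContinuousLinearMap.adjoint T.toContinuousLinearMap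
  have hA (y : H) (g : Lp ℂ 2 lam) : (⟪y, T g⟫ : ℂ) = ∫ ω, conj (A y ω) * g ω ∂lam := by
    rw [← T.coe_toContinuousLinearMap, ← ContinuousLinearMap.adjoint_inner_left, L2.inner_def]
    simp [A, mul_comm]
  have hAT (g : Lp ℂ 2 lam) : A (T g) = g :=
    ext_inner_right ℂ fun k => by
      rw [ContinuousLinearMap.adjoint_inner_left]
      exact T.inner_map_map g k
  -- the density of `⟪y, μ ·⟫` is `conj (A y)`
  have hm (y : H) : Measurable (fun ω => conj (A y ω)) :=
    Complex.continuous_conj.measurable.comp (Lp.stronglyMeasurable (A y)).measurable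
  have hL (y : H) : MemLp (fun ω => conj (A y ω)) 2 lam := (Lp.memLp (A y)).star
  have hi (y : H) : Integrable (fun ω => conj (A y ω)) lam :=
    (hL y).integrable one_le_two
  have hs (y : H) (X : Set Ω) (hX : MeasurableSet X) :
      vmInner μ y X = ∫ ω in X, conj (A y ω) ∂lam := by
    have h1 : vmInner μ y X = ⟪y, μ X⟫ := rfl
    rw [h1, ← hT X hX, hA, ← integral_indicator hX]
    refine integral_congr_ae ?_
    filter_upwards [indicatorConstLp_coeFn (p := 2) (hs := hX) (hμs := measure_ne_top lam X)
      (c := (1 : ℂ))] with ω hω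
    rw [hω]
    by_cases h : ω ∈ X <;> simp [h]
  have hint (y : H) := cmIntegrable_iff_of_density (hm y) (hi y) (hs y) hf
  have hval (y : H) := cmIntegral_of_density (hm y) (hi y) (hs y) hf
  have hsq : Integrable (fun ω => ‖f ω‖ ^ 2) lam ↔ MemLp f 2 lam :=
    (memLp_two_iff_integrable_sq_norm hf.aestronglyMeasurable).symm
  have hfwd (h : MemLp f 2 lam) : (∀ y : H, CMIntegrable (vmInner μ y) f) ∧
      ∀ y : H, ⟪y, T (h.toLp f)⟫ = cmIntegral (vmInner μ y) f := by
    have hci (y : H) : CMIntegrable (vmInner μ y) f :=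
      (hint y).2 (MemLp.integrable_mul (hL y) h)
    refine ⟨hci, fun y => ?_⟩
    rw [hval y (hci y), hA]
    refine integral_congr_ae ?_
    filter_upwards [h.coeFn_toLp] with ω hω
    rw [hω]
  have hbwd (h : ∀ y : H, CMIntegrable (vmInner μ y) f) (v : H)
      (hv : ∀ y : H, ⟪y, v⟫ = cmIntegral (vmInner μ y) f) : MemLp f 2 lam := by
    -- for `y = μ X = T 1_X` the density is `1_X`, since `T† T = id`
    have hind (X : Set Ω) (hX : MeasurableSet X) :
        (fun ω => conj (A (μ X) ω) * f ω) =ᵐ[lam] X.indicator f := by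
      rw [← hT X hX, hAT]
      filter_upwards [indicatorConstLp_coeFn (p := 2) (hs := hX) (hμs := measure_ne_top lam X)
        (c := (1 : ℂ))] with ω hω
      rw [hω]
      by_cases h : ω ∈ X <;> simp [h]
    have hfi : Integrable f lam := by
      have := ((hint (μ Set.univ)).1 (h _)).congr (hind Set.univ .univ)
      simpa using this
    have hae : f =ᵐ[lam] A v := by
      refine Integrable.ae_eq_of_forall_setIntegral_eq _ _ hfi
        ((Lp.memLp (A v)).integrable one_le_two) fun X hX _ => ?_
      rw [← integral_indicator hX, ← integral_congr_ae (hind X hX), ← hval _ (h _), ← hv,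
        ← hT X hX, ← L2.inner_indicatorConstLp_one hX (measure_ne_top lam X) (A v),
        ContinuousLinearMap.adjoint_inner_right]
      rfl
    exact (memLp_congr_ae hae).2 (Lp.memLp (A v))
  refine ⟨⟨fun h => ?_, fun ⟨h, v, hv⟩ => hsq.2 (hbwd h v hv)⟩, fun h v hv => ?_⟩
  · obtain ⟨h1, h2⟩ := hfwd (hsq.1 h)
    exact ⟨h1, _, h2⟩
  · have hL2 := hbwd h v hv
    have hvT : v = T (hL2.toLp f) :=
      ext_inner_left ℂ fun y => by rw [hv y, (hfwd hL2).2 y]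
    rw [hvT, T.norm_map, norm_sq_toLp_two]
end

section
/- Let μ : 𝒜 → H be a vector measure with values in a complex Hilbert space H, and let f : Ω → ℂ be a measurable function such that f is integrable with respect to the complex measure μ_y(X) := ⟨y, μ(X)⟩ for every y ∈ H. Then for each X ∈ 𝒜 there exists a unique vector ν(X) ∈ H such that ⟨y, ν(X)⟩ = ∫_X f dμ_y for all y ∈ H. -/
/-!
The integrals of simple functions against `μ_y` are represented by vectors: for a simple `g`,
`∫ g dμ_y = ⟨y, ∑ c • μ (g⁻¹ {c})⟩`. Approximating `X.indicator f` pointwise by simple functions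
`g n` with `‖g n‖ ≤ 2 ‖f‖`, dominated convergence (for each of the four Jordan parts of `μ_y`)
shows that the representing vectors `v n` satisfy `⟨y, v n⟩ → ∫_X f dμ_y` for every `y`. By the
Banach–Steinhaus theorem the pointwise limit of the functionals `⟨v n, ·⟩` is a continuous linear
functional, and the Riesz representation theorem turns it into the desired vector. In particular,
neither linearity nor boundedness of `y ↦ ∫_X f dμ_y` has to be checked directly.
-/

open MeasureTheory ComplexConjugate Filter
open scoped ComplexInnerProductSpace ENNReal NNReal

lemma apply_eq_jordan_sub {Ω : Type*} [MeasurableSpace Ω] (s : SignedMeasure Ω) {A : Set Ω}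
    (hA : MeasurableSet A) :
    s A = s.toJordanDecomposition.posPart.real A - s.toJordanDecomposition.negPart.real A := by
  conv_lhs => rw [← s.toSignedMeasure_toJordanDecomposition]
  simp [JordanDecomposition.toSignedMeasure,
    Measure.toSignedMeasure_apply_measurable hA]

lemma smIntegral_simpleFunc {Ω : Type*} [MeasurableSpace Ω] (s : SignedMeasure Ω)
    (g : SimpleFunc Ω ℂ) :
    smIntegral s g = ∑ c ∈ g.range, ((s (g ⁻¹' {c}) : ℝ) : ℂ) * c := by
  unfold smIntegral
  rw [SimpleFunc.integral_eq_sum _ (SimpleFunc.integrable_of_isFiniteMeasure g),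
    SimpleFunc.integral_eq_sum _ (SimpleFunc.integrable_of_isFiniteMeasure g),
    ← Finset.sum_sub_distrib]
  refine Finset.sum_congr rfl fun c _ => ?_
  rw [apply_eq_jordan_sub s (g.measurableSet_fiber c), Complex.real_smul, Complex.real_smul]
  push_cast
  ring

lemma cmIntegral_simpleFunc {Ω : Type*} [MeasurableSpace Ω] (ν : ComplexMeasure Ω)
    (g : SimpleFunc Ω ℂ) :
    cmIntegral ν g = ∑ c ∈ g.range, c * ν (g ⁻¹' {c}) := by
  unfold cmIntegral
  rw [smIntegral_simpleFunc, smIntegral_simpleFunc, Finset.mul_sum, ← Finset.sum_add_distrib]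
  refine Finset.sum_congr rfl fun c _ => ?_
  have hre : ComplexMeasure.re ν (g ⁻¹' {c}) = (ν (g ⁻¹' {c})).re := rfl
  have him : ComplexMeasure.im ν (g ⁻¹' {c}) = (ν (g ⁻¹' {c})).im := rfl
  rw [hre, him]
  conv_rhs => rw [← Complex.re_add_im (ν (g ⁻¹' {c}))]
  ring

lemma smIntegral_tendsto {Ω : Type*} [MeasurableSpace Ω] (s : SignedMeasure Ω)
    {F : ℕ → Ω → ℂ} {f : Ω → ℂ} {b : Ω → ℝ} (hF : ∀ n, Measurable (F n))
    (hb : Integrable b s.totalVariation) (hFb : ∀ n x, ‖F n x‖ ≤ b x)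
    (hlim : ∀ x, Tendsto (fun n => F n x) atTop (nhds (f x))) :
    Tendsto (fun n => smIntegral s (F n)) atTop (nhds (smIntegral s f)) := by
  have hb' : Integrable b s.toJordanDecomposition.posPart ∧
      Integrable b s.toJordanDecomposition.negPart := by
    rwa [SignedMeasure.totalVariation, integrable_add_measure] at hb
  exact (tendsto_integral_of_dominated_convergence b
      (fun n => (hF n).aestronglyMeasurable) hb'.1
      (fun n => .of_forall (hFb n)) (.of_forall hlim)).sub
    (tendsto_integral_of_dominated_convergence b
      (fun n => (hF n).aestronglyMeasurable) hb'.2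
      (fun n => .of_forall (hFb n)) (.of_forall hlim))

lemma cmIntegral_tendsto {Ω : Type*} [MeasurableSpace Ω] (ν : ComplexMeasure Ω)
    {F : ℕ → Ω → ℂ} {f : Ω → ℂ} {b : Ω → ℝ} (hF : ∀ n, Measurable (F n))
    (hb : Integrable b (cmVariation ν)) (hFb : ∀ n x, ‖F n x‖ ≤ b x)
    (hlim : ∀ x, Tendsto (fun n => F n x) atTop (nhds (f x))) :
    Tendsto (fun n => cmIntegral ν (F n)) atTop (nhds (cmIntegral ν f)) := by
  rw [cmVariation, integrable_add_measure] at hb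
  exact (smIntegral_tendsto _ hF hb.1 hFb hlim).add
    ((smIntegral_tendsto _ hF hb.2 hFb hlim).const_mul Complex.I)

/-- A pointwise limit of the functionals `⟨·, v n⟩` is represented by a vector
(Banach–Steinhaus together with Riesz representation). -/
lemma exists_inner_eq_of_tendsto {H : Type*} [NormedAddCommGroup H] [InnerProductSpace ℂ H]
    [CompleteSpace H] (v : ℕ → H) (L : H → ℂ)
    (h : ∀ y, Tendsto (fun n => ⟪y, v n⟫) atTop (nhds (L y))) :
    ∃ w : H, ∀ y, ⟪y, w⟫ = L y := by
  -- `L` is conjugate-linear, so its conjugate is the limit of the linear functionals `⟨v n, ·⟩`.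
  have h' : Tendsto (fun n y => innerSL ℂ (v n) y) atTop (nhds fun y => conj (L y)) := by
    rw [tendsto_pi_nhds]
    intro y
    have := (Complex.continuous_conj.tendsto _).comp (h y)
    refine this.congr fun n => ?_
    simp [inner_conj_symm]
  let T : H →L[ℂ] ℂ := continuousLinearMapOfTendsto (fun n => innerSL ℂ (v n)) h'
  refine ⟨(InnerProductSpace.toDual ℂ H).symm T, fun y => ?_⟩
  rw [← inner_conj_symm, InnerProductSpace.toDual_symm_apply]
  exact Complex.conj_conj _

theorem stmt_2 {Ω : Type*} [MeasurableSpace Ω] {H : Type*} [NormedAddCommGroup H]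
    [InnerProductSpace ℂ H] [CompleteSpace H] (μ : VectorMeasure Ω H)
    (f : Ω → ℂ) (hf : Measurable f)
    (hint : ∀ y : H, CMIntegrable (vmInner μ y) f) :
    ∀ X : Set Ω, MeasurableSet X →
      ∃! v : H, ∀ y : H, ⟪y, v⟫ = cmIntegral (vmInner μ y) (X.indicator f) := by
  intro X hX
  have hXf : Measurable (X.indicator f) := hf.indicator hX
  let g : ℕ → SimpleFunc Ω ℂ :=
    SimpleFunc.approxOn (X.indicator f) hXf Set.univ 0 (Set.mem_univ 0)
  obtain ⟨w, hw⟩ := exists_inner_eq_of_tendsto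
    (fun n => ∑ c ∈ (g n).range, c • μ (g n ⁻¹' {c}))
    (fun y => cmIntegral (vmInner μ y) (X.indicator f)) fun y => by
      have hb : Integrable (fun x => ‖X.indicator f x‖ + ‖X.indicator f x‖)
          (cmVariation (vmInner μ y)) := by
        have := (Integrable.indicator (hint y) hX).norm
        exact this.add this
      refine (cmIntegral_tendsto (vmInner μ y) (F := fun n => g n) (fun n => (g n).measurable) hb
        (fun n x => SimpleFunc.norm_approxOn_zero_le hXf (Set.mem_univ 0) x n)
        (fun x => SimpleFunc.tendsto_approxOn hXf (Set.mem_univ 0) (by simp))).congr fun n => ?_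
      rw [cmIntegral_simpleFunc, inner_sum]
      refine Finset.sum_congr rfl fun c _ => ?_
      rw [inner_smul_right]
      rfl
  exact ⟨w, hw, fun w' hw' => ext_inner_left ℂ fun y => by rw [hw y, hw' y]⟩
end

section
/- Let E : 𝒜 → L(H) be a normalized POVM and f : Ω → ℂ a measurable function, and set D̃ := {φ ∈ H : ∫ |f|² dE_{φ,φ} < ∞} (the square integrability domain). Then: (i) D̃ is a linear subspace of H; (ii) for every φ ∈ D̃ and every ψ ∈ H, f is E_{ψ,φ}-integrable; (iii) for every φ ∈ D̃ there is a unique vector L̃(f,E)φ ∈ H such that ⟨ψ, L̃(f,E)φ⟩ = ∫ f dE_{ψ,φ} for all ψ ∈ H, and ‖L̃(f,E)φ‖² ≤ ∫ |f|² dE_{φ,φ}. -/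
/-!
For finitely many vectors, all complex measures `E_{ψ,φ}` involved have densities with respect to
one finite measure `μ` (`exists_common_dens`), and integrability and integrals in the Jordan
decomposition sense become ordinary ones against these densities (`IsDens.integrable_iff`,
`IsDens.cmIntegral_eq`). Let `a`, `b`, `h` be the densities of `E_{φ,φ}`, `E_{ψ,ψ}`, `E_{ψ,φ}`.
Positivity of `E_{χ,χ}` for `χ = ψ + c φ`, `c ∈ ℂ`, gives `|h|² ≤ a b` almost everywhere
(`POVM.ae_cauchy_schwarz`), hence `2 s |f| |h| ≤ s² |f|² a + b` for all real `s`.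

The case `s = 1` gives integrability of `f` for `E_{ψ,φ}` and, with `|f|²` as weight, closure of
the domain under addition. Integrating and taking the discriminant in `s` gives
`|∫ f dE_{ψ,φ}|² ≤ (∫ |f|² dE_{φ,φ}) ‖ψ‖²`, where normalization enters through
`∫ b dμ = E_{ψ,ψ}(Ω) = ‖ψ‖²` (`POVM.norm_cmIntegral_sq_le`). The vector then comes from Riesz
representation, and its norm bound from the choice `ψ = v`.
-/


open MeasureTheory ComplexConjugate Filter
open scoped ComplexInnerProductSpace ENNReal NNReal

/-- A positive operator (valued) measure: `op X` are the operators `E(X)`, and `cm ψ φ` is the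
complex measure `E_{ψ,φ} : X ↦ ⟨ψ, E(X)φ⟩`. -/
structure POVM (Ω : Type*) [MeasurableSpace Ω] (H : Type*) [NormedAddCommGroup H]
    [InnerProductSpace ℂ H] where
  op : Set Ω → H →L[ℂ] H
  cm : H → H → MeasureTheory.ComplexMeasure Ω
  cm_apply : ∀ (ψ φ : H) (X : Set Ω), MeasurableSet X → cm ψ φ X = ⟪ψ, op X φ⟫
  pos : ∀ (φ : H) (X : Set Ω), MeasurableSet X →
    0 ≤ (⟪φ, op X φ⟫ : ℂ).re ∧ (⟪φ, op X φ⟫ : ℂ).im = 0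

/-! ### Densities of complex measures -/

/-- `h` is a measurable, integrable density of the complex measure `ν` with respect to `μ`. -/
structure IsDens {Ω : Type*} [MeasurableSpace Ω] (ν : ComplexMeasure Ω) (μ : Measure Ω)
    (h : Ω → ℂ) : Prop where
  meas : Measurable h
  int : Integrable h μ
  apply : ∀ X, MeasurableSet X → ν X = ∫ ω in X, h ω ∂μ

section Density

variable {Ω : Type*} [MeasurableSpace Ω]

/-- For a signed measure with density `g`, the Jordan parts have densities `g⁺` and `g⁻`. -/
lemma sm_jordan {μ : Measure Ω} {s : SignedMeasure Ω} {g : Ω → ℝ} (hg : Measurable g)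
    (hgi : Integrable g μ) (hs : ∀ X, MeasurableSet X → s X = ∫ ω in X, g ω ∂μ) :
    s.toJordanDecomposition.posPart = μ.withDensity (fun x => ENNReal.ofReal (g x)) ∧
    s.toJordanDecomposition.negPart = μ.withDensity (fun x => ENNReal.ofReal (-g x)) := by
  have h : s = 0 + μ.withDensityᵥ g := by
    rw [zero_add]
    ext X hX
    rw [hs X hX, withDensityᵥ_apply hgi hX]
  have := SignedMeasure.toJordanDecomposition_eq_of_eq_add_withDensity hg hgi
    VectorMeasure.MutuallySingular.zero_left h
  rw [this]
  simp [SignedMeasure.toJordanDecomposition_zero]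

lemma sm_integrable_iff {μ : Measure Ω} {s : SignedMeasure Ω} {g : Ω → ℝ} (hg : Measurable g)
    (hgi : Integrable g μ) (hs : ∀ X, MeasurableSet X → s X = ∫ ω in X, g ω ∂μ)
    {F : Ω → ℂ} (hF : Measurable F) :
    Integrable F s.totalVariation ↔ Integrable (fun ω => (g ω : ℂ) * F ω) μ := by
  obtain ⟨hp, hn⟩ := sm_jordan hg hgi hs
  rw [SignedMeasure.totalVariation, hp, hn, integrable_add_measure,
    integrable_withDensity_iff_integrable_smul' (by fun_prop) (by simp),
    integrable_withDensity_iff_integrable_smul' (by fun_prop) (by simp)]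
  simp only [ENNReal.toReal_ofReal', Complex.real_smul]
  constructor
  · rintro ⟨h1, h2⟩
    refine (h1.sub h2).congr (Eventually.of_forall fun ω => ?_)
    have : (g ω : ℂ) = ((max (g ω) 0 : ℝ) : ℂ) - ((max (-g ω) 0 : ℝ) : ℂ) := by
      rw [← Complex.ofReal_sub]
      congr 1
      rcases le_total (g ω) 0 with h | h
      · simp [h]
      · simp [h]
    simp only [Pi.sub_apply]
    rw [this]
    ring
  · intro h
    constructor
    · refine h.mono (by fun_prop) (Eventually.of_forall fun ω => ?_)
      rw [norm_mul, norm_mul, Complex.norm_real, Complex.norm_real]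
      gcongr
      rw [Real.norm_of_nonneg (le_max_right _ _)]
      exact max_le (le_abs_self _) (abs_nonneg _)
    · refine h.mono (by fun_prop) (Eventually.of_forall fun ω => ?_)
      rw [norm_mul, norm_mul, Complex.norm_real, Complex.norm_real]
      gcongr
      rw [Real.norm_of_nonneg (le_max_right _ _)]
      exact max_le (neg_le_abs _) (abs_nonneg _)

lemma smIntegral_eq {μ : Measure Ω} {s : SignedMeasure Ω} {g : Ω → ℝ} (hg : Measurable g)
    (hgi : Integrable g μ) (hs : ∀ X, MeasurableSet X → s X = ∫ ω in X, g ω ∂μ)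
    {F : Ω → ℂ} (hFi : Integrable F s.totalVariation) :
    smIntegral s F = ∫ ω, (g ω : ℂ) * F ω ∂μ := by
  obtain ⟨hp, hn⟩ := sm_jordan hg hgi hs
  rw [SignedMeasure.totalVariation, hp, hn, integrable_add_measure,
    integrable_withDensity_iff_integrable_smul' (by fun_prop) (by simp),
    integrable_withDensity_iff_integrable_smul' (by fun_prop) (by simp)] at hFi
  rw [smIntegral, hp, hn,
    integral_withDensity_eq_integral_toReal_smul (by fun_prop) (by simp),
    integral_withDensity_eq_integral_toReal_smul (by fun_prop) (by simp),
    ← integral_sub hFi.1 hFi.2]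
  refine integral_congr_ae (Eventually.of_forall fun ω => ?_)
  simp only [ENNReal.toReal_ofReal', Complex.real_smul]
  rw [← sub_mul, ← Complex.ofReal_sub]
  congr 2
  rcases le_total (g ω) 0 with h | h
  · simp [h]
  · simp [h]

lemma IsDens.re_apply {ν : ComplexMeasure Ω} {μ : Measure Ω} {h : Ω → ℂ} (H : IsDens ν μ h)
    (X : Set Ω) (hX : MeasurableSet X) :
    ComplexMeasure.re ν X = ∫ ω in X, (h ω).re ∂μ := by
  have h1 : ComplexMeasure.re ν X = (ν X).re := rfl
  rw [h1, H.apply X hX]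
  exact (integral_re H.int.integrableOn).symm

lemma IsDens.im_apply {ν : ComplexMeasure Ω} {μ : Measure Ω} {h : Ω → ℂ} (H : IsDens ν μ h)
    (X : Set Ω) (hX : MeasurableSet X) :
    ComplexMeasure.im ν X = ∫ ω in X, (h ω).im ∂μ := by
  have h1 : ComplexMeasure.im ν X = (ν X).im := rfl
  rw [h1, H.apply X hX]
  exact (integral_im H.int.integrableOn).symm

lemma IsDens.integrable_iff {ν : ComplexMeasure Ω} {μ : Measure Ω} {h : Ω → ℂ}
    (H : IsDens ν μ h) {F : Ω → ℂ} (hF : Measurable F) :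
    CMIntegrable ν F ↔ Integrable (fun ω => h ω * F ω) μ := by
  have hm := H.meas
  rw [CMIntegrable, cmVariation, integrable_add_measure,
    sm_integrable_iff (by fun_prop) H.int.re H.re_apply hF,
    sm_integrable_iff (by fun_prop) H.int.im H.im_apply hF]
  constructor
  · rintro ⟨h1, h2⟩
    refine (h1.add (h2.const_mul Complex.I)).congr (Eventually.of_forall fun ω => ?_)
    simp only [Pi.add_apply]
    conv_rhs => rw [← Complex.re_add_im (h ω)]
    simp only [RCLike.re_to_complex, RCLike.im_to_complex]
    ring
  · intro h1
    constructor
    · refine h1.mono (by fun_prop) (Eventually.of_forall fun ω => ?_)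
      rw [norm_mul, norm_mul, Complex.norm_real]
      gcongr
      exact Complex.abs_re_le_norm _
    · refine h1.mono (by fun_prop) (Eventually.of_forall fun ω => ?_)
      rw [norm_mul, norm_mul, Complex.norm_real]
      gcongr
      exact Complex.abs_im_le_norm _

lemma IsDens.cmIntegral_eq {ν : ComplexMeasure Ω} {μ : Measure Ω} {h : Ω → ℂ}
    (H : IsDens ν μ h) {F : Ω → ℂ} (hF : Measurable F) (hFi : CMIntegrable ν F) :
    cmIntegral ν F = ∫ ω, h ω * F ω ∂μ := by
  have hm := H.meas
  have hFi' := hFi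
  rw [CMIntegrable, cmVariation, integrable_add_measure] at hFi
  have i1 := (sm_integrable_iff (by fun_prop) H.int.re H.re_apply hF).1 hFi.1
  have i2 := (sm_integrable_iff (by fun_prop) H.int.im H.im_apply hF).1 hFi.2
  rw [cmIntegral, smIntegral_eq (by fun_prop) H.int.re H.re_apply hFi.1,
    smIntegral_eq (by fun_prop) H.int.im H.im_apply hFi.2, ← integral_const_mul,
    ← integral_add i1 (i2.const_mul _)]
  refine integral_congr_ae (Eventually.of_forall fun ω => ?_)
  simp only []
  conv_rhs => rw [← Complex.re_add_im (h ω)]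
  simp only [RCLike.re_to_complex, RCLike.im_to_complex]
  ring

/-- Radon–Nikodym: a density exists as soon as `μ` dominates the variation of `ν`. -/
lemma exists_isDens {ν : ComplexMeasure Ω} {μ : Measure Ω} [IsFiniteMeasure μ]
    (hle : cmVariation ν ≤ μ) : ∃ h, IsDens ν μ h := by
  have hac : ∀ s : SignedMeasure Ω, s.totalVariation ≤ μ →
      μ.withDensityᵥ (s.rnDeriv μ) = s := by
    intro s hs
    refine (SignedMeasure.absolutelyContinuous_iff_withDensityᵥ_rnDeriv_eq s μ).1 ?_
    rw [SignedMeasure.absolutelyContinuous_ennreal_iff,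
      VectorMeasure.ennrealToMeasure_toENNRealVectorMeasure]
    exact hs.absolutelyContinuous
  have h1 := hac (ComplexMeasure.re ν) ((Measure.le_add_right le_rfl).trans hle)
  have h2 := hac (ComplexMeasure.im ν) ((Measure.le_add_left le_rfl).trans hle)
  refine ⟨ν.rnDeriv μ, ?_, ComplexMeasure.integrable_rnDeriv ν μ, ?_⟩
  · have m1 := SignedMeasure.measurable_rnDeriv (ComplexMeasure.re ν) μ
    have m2 := SignedMeasure.measurable_rnDeriv (ComplexMeasure.im ν) μ
    exact Complex.measurableEquivRealProd.symm.measurable.comp (m1.prodMk m2)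
  · intro X hX
    have hi := (ComplexMeasure.integrable_rnDeriv ν μ).integrableOn (s := X)
    apply Complex.ext
    · have := congrArg (fun s : SignedMeasure Ω => s X) h1
      simp only [withDensityᵥ_apply (SignedMeasure.integrable_rnDeriv _ _) hX] at this
      refine Eq.trans ?_ (integral_re hi)
      exact this.symm
    · have := congrArg (fun s : SignedMeasure Ω => s X) h2
      simp only [withDensityᵥ_apply (SignedMeasure.integrable_rnDeriv _ _) hX] at this
      refine Eq.trans ?_ (integral_im hi)
      exact this.symm

/-- Finitely many complex measures have densities with respect to a common finite measure. -/
lemma exists_common_dens (l : List (ComplexMeasure Ω)) :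
    ∃ μ : Measure Ω, IsFiniteMeasure μ ∧ ∀ ν ∈ l, ∃ h, IsDens ν μ h := by
  obtain ⟨μ, hμ, h⟩ : ∃ μ : Measure Ω, IsFiniteMeasure μ ∧ ∀ ν ∈ l, cmVariation ν ≤ μ := by
    induction l with
    | nil => exact ⟨0, inferInstance, by simp⟩
    | cons a l ih =>
      obtain ⟨μ, hμ, h⟩ := ih
      refine ⟨cmVariation a + μ, by unfold cmVariation; infer_instance, ?_⟩
      intro ν hν
      rcases List.mem_cons.1 hν with rfl | hν
      · exact Measure.le_add_right le_rfl
      · exact Measure.le_add_left (h ν hν)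
  exact ⟨μ, hμ, fun ν hν => exists_isDens (h ν hν)⟩

lemma IsDens.add {ν ν' : ComplexMeasure Ω} {μ : Measure Ω} {h h' : Ω → ℂ}
    (H : IsDens ν μ h) (H' : IsDens ν' μ h') :
    IsDens (ν + ν') μ (fun ω => h ω + h' ω) where
  meas := H.meas.add H'.meas
  int := H.int.add H'.int
  apply X hX := by
    rw [integral_add H.int.integrableOn H'.int.integrableOn, ← H.apply X hX, ← H'.apply X hX]
    rfl

lemma IsDens.smul {ν : ComplexMeasure Ω} {μ : Measure Ω} {h : Ω → ℂ}
    (H : IsDens ν μ h) (c : ℂ) : IsDens (c • ν) μ (fun ω => c * h ω) where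
  meas := H.meas.const_mul c
  int := H.int.const_mul c
  apply X hX := by
    rw [integral_const_mul, ← H.apply X hX]
    rfl

lemma IsDens.ae_re_nonneg {ν : ComplexMeasure Ω} {μ : Measure Ω} {h : Ω → ℂ}
    (H : IsDens ν μ h) (hpos : ∀ X, MeasurableSet X → 0 ≤ (ν X).re) :
    ∀ᵐ ω ∂μ, 0 ≤ (h ω).re := by
  refine ae_nonneg_of_forall_setIntegral_nonneg (f := fun ω => (h ω).re) H.int.re ?_
  intro X hX _
  rw [← H.re_apply X hX]
  exact hpos X hX

end Density

/-! ### Sesquilinear estimates for a POVM -/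

namespace POVM

variable {Ω : Type*} [MeasurableSpace Ω] {H : Type*} [NormedAddCommGroup H]
  [InnerProductSpace ℂ H] (E : POVM Ω H)

lemma cm_add_left (ψ₁ ψ₂ φ : H) : E.cm (ψ₁ + ψ₂) φ = E.cm ψ₁ φ + E.cm ψ₂ φ := by
  ext X hX
  simp [E.cm_apply _ _ X hX]

lemma cm_add_right (ψ φ₁ φ₂ : H) : E.cm ψ (φ₁ + φ₂) = E.cm ψ φ₁ + E.cm ψ φ₂ := by
  ext X hX
  simp [E.cm_apply _ _ X hX]

lemma cm_smul_left (c : ℂ) (ψ φ : H) : E.cm (c • ψ) φ = conj c • E.cm ψ φ := by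
  ext X hX
  simp [E.cm_apply _ _ X hX, mul_comm]

lemma cm_smul_right (c : ℂ) (ψ φ : H) : E.cm ψ (c • φ) = c • E.cm ψ φ := by
  ext X hX
  simp [E.cm_apply _ _ X hX]

/-- Positivity of `E(X)` over `ℂ` makes it symmetric. -/
lemma cm_conj (ψ φ : H) {X : Set Ω} (hX : MeasurableSet X) :
    E.cm φ ψ X = conj (E.cm ψ φ X) := by
  have hs : (E.op X : H →ₗ[ℂ] H).IsSymmetric := by
    rw [LinearMap.isSymmetric_iff_inner_map_self_real]
    intro v
    have h := Complex.conj_eq_iff_im.2 (E.pos v X hX).2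
    rw [inner_conj_symm] at h ⊢
    exact h.symm
  rw [E.cm_apply _ _ X hX, E.cm_apply _ _ X hX, inner_conj_symm]
  exact (hs φ ψ).symm

lemma cm_self_nonneg (φ : H) (X : Set Ω) (hX : MeasurableSet X) : 0 ≤ (E.cm φ φ X).re := by
  rw [E.cm_apply _ _ X hX]
  exact (E.pos φ X hX).1

/-- Cauchy–Schwarz at the level of densities: `|dE_{ψ,φ}|² ≤ dE_{φ,φ} dE_{ψ,ψ}`. It comes from
the positivity of `E_{χ,χ}` for `χ = ψ + c φ`, with `c` in a countable dense subset of `ℂ` so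
that the exceptional null set does not depend on `c`. -/
lemma ae_cauchy_schwarz {φ ψ : H} {μ : Measure Ω} {a b h : Ω → ℂ}
    (Ha : IsDens (E.cm φ φ) μ a) (Hb : IsDens (E.cm ψ ψ) μ b) (Hh : IsDens (E.cm ψ φ) μ h) :
    ∀ᵐ ω ∂μ, ‖h ω‖ ^ 2 ≤ (a ω).re * (b ω).re := by
  have key : ∀ c : ℂ, ∀ᵐ ω ∂μ, 0 ≤ (‖c‖ ^ 2 : ℝ) * (a ω).re + 2 * (c * h ω).re + (b ω).re := by
    intro c
    have H1 := ((Ha.smul ((‖c‖ ^ 2 : ℝ) : ℂ)).add (Hh.smul (2 * c))).add Hb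
    have := H1.ae_re_nonneg ?_
    · filter_upwards [this] with ω hω
      simp only [Complex.add_re, Complex.re_ofReal_mul, mul_assoc] at hω ⊢
      simpa using hω
    · intro X hX
      have hpos := E.cm_self_nonneg (ψ + c • φ) X hX
      rw [cm_add_left, cm_add_right, cm_add_right, cm_smul_left, cm_smul_left, cm_smul_right,
        cm_smul_right] at hpos
      simp only [add_apply, smul_apply, smul_eq_mul,
        E.cm_conj ψ φ hX] at hpos ⊢
      convert hpos using 1
      rw [Complex.sq_norm, Complex.normSq_apply]
      simp
      ring
  have key2 := ae_all_iff.2 fun n => key (TopologicalSpace.denseSeq ℂ n)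
  filter_upwards [key2] with ω hω
  have hall : ∀ c : ℂ, 0 ≤ (‖c‖ ^ 2 : ℝ) * (a ω).re + 2 * (c * h ω).re + (b ω).re := by
    intro c
    have hcl : IsClosed
        {c : ℂ | 0 ≤ (‖c‖ ^ 2 : ℝ) * (a ω).re + 2 * (c * h ω).re + (b ω).re} :=
      isClosed_le continuous_const (by fun_prop)
    exact (TopologicalSpace.denseRange_denseSeq ℂ).induction_on c hcl hω
  -- With `c = t * conj h` the form becomes a nonnegative real quadratic polynomial in `t`.
  have hd := discrim_le_zero (K := ℝ) (a := ‖h ω‖ ^ 2 * (a ω).re) (b := 2 * ‖h ω‖ ^ 2)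
    (c := (b ω).re) (by
      intro t
      have := hall (t * conj (h ω))
      have e : ((t : ℂ) * conj (h ω) * h ω).re = t * ‖h ω‖ ^ 2 := by
        rw [mul_assoc, mul_comm (conj (h ω)), Complex.mul_conj, ← Complex.ofReal_mul,
          Complex.ofReal_re, Complex.sq_norm]
      rw [e, norm_mul, Complex.norm_real, mul_pow, RCLike.norm_conj, Real.norm_eq_abs, sq_abs]
        at this
      linarith)
  rw [discrim] at hd
  rcases eq_or_ne (h ω) 0 with h0 | h0
  · have h1 := hall 0
    rw [h0] at hall ⊢
    have hA : 0 ≤ (b ω).re := by simpa using h1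
    have := discrim_le_zero (K := ℝ) (a := (a ω).re) (b := 0) (c := (b ω).re) (by
      intro t
      have := hall t
      rw [Complex.norm_real, Real.norm_eq_abs, sq_abs] at this
      simp at this ⊢
      linarith)
    rw [discrim] at this
    simp
    linarith
  · have hp : 0 < ‖h ω‖ ^ 2 := by positivity
    have : ‖h ω‖ ^ 2 * (‖h ω‖ ^ 2) ≤ ‖h ω‖ ^ 2 * ((a ω).re * (b ω).re) := by linarith
    exact le_of_mul_le_mul_left this hp

/-- `2sx|h| ≤ s²x²a + b` for all real `s` and `x`, almost everywhere; applied with `x = |f|`. -/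
lemma ae_young {φ ψ : H} {μ : Measure Ω} {a b h : Ω → ℂ}
    (Ha : IsDens (E.cm φ φ) μ a) (Hb : IsDens (E.cm ψ ψ) μ b) (Hh : IsDens (E.cm ψ φ) μ h) :
    ∀ᵐ ω ∂μ, ∀ x s : ℝ, 2 * s * (x * ‖h ω‖) ≤ s ^ 2 * (x ^ 2 * (a ω).re) + (b ω).re := by
  filter_upwards [E.ae_cauchy_schwarz Ha Hb Hh, Ha.ae_re_nonneg (E.cm_self_nonneg φ),
    Hb.ae_re_nonneg (E.cm_self_nonneg ψ)] with ω h1 h2 h3 x s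
  have h4 : ‖h ω‖ ≤ √(a ω).re * √(b ω).re := by
    rw [← Real.sqrt_mul h2]
    exact Real.le_sqrt_of_sq_le h1
  have h5 : 2 * s * (x * ‖h ω‖) ≤ 2 * |s * x| * (√(a ω).re * √(b ω).re) := by
    calc 2 * s * (x * ‖h ω‖) = 2 * (s * x) * ‖h ω‖ := by ring
      _ ≤ 2 * |s * x| * ‖h ω‖ := by gcongr; exact le_abs_self _
      _ ≤ _ := by gcongr
  have e1 := Real.sq_sqrt h2
  have e2 := Real.sq_sqrt h3
  have e3 := sq_abs (s * x)
  calc _ ≤ _ := h5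
    _ ≤ |s * x| ^ 2 * √(a ω).re ^ 2 + √(b ω).re ^ 2 := by
      nlinarith [sq_nonneg (|s * x| * √(a ω).re - √(b ω).re)]
    _ = _ := by rw [e1, e2, e3]; ring

variable {f : Ω → ℂ}

lemma integrable_sq {φ : H} {μ : Measure Ω} {a : Ω → ℂ} (hf : Measurable f)
    (Ha : IsDens (E.cm φ φ) μ a)
    (hφ : CMIntegrable (E.cm φ φ) (fun ω => ((‖f ω‖ ^ 2 : ℝ) : ℂ))) :
    Integrable (fun ω => ‖f ω‖ ^ 2 * (a ω).re) μ := by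
  have := ((Ha.integrable_iff (by fun_prop)).1 hφ).re
  refine this.congr (Eventually.of_forall fun ω => ?_)
  simp only [RCLike.re_to_complex, Complex.re_mul_ofReal]
  ring

lemma re_cmIntegral_sq {φ : H} {μ : Measure Ω} {a : Ω → ℂ} (hf : Measurable f)
    (Ha : IsDens (E.cm φ φ) μ a)
    (hφ : CMIntegrable (E.cm φ φ) (fun ω => ((‖f ω‖ ^ 2 : ℝ) : ℂ))) :
    (cmIntegral (E.cm φ φ) (fun ω => ((‖f ω‖ ^ 2 : ℝ) : ℂ))).re =
      ∫ ω, ‖f ω‖ ^ 2 * (a ω).re ∂μ := by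
  rw [Ha.cmIntegral_eq (by fun_prop) hφ]
  refine (integral_re ((Ha.integrable_iff (by fun_prop)).1 hφ)).symm.trans ?_
  refine integral_congr_ae (Eventually.of_forall fun ω => ?_)
  simp only [RCLike.re_to_complex, Complex.re_mul_ofReal]
  ring

lemma integrable_dens_mul {φ ψ : H} {μ : Measure Ω} {a b h : Ω → ℂ} (hf : Measurable f)
    (Ha : IsDens (E.cm φ φ) μ a) (Hb : IsDens (E.cm ψ ψ) μ b) (Hh : IsDens (E.cm ψ φ) μ h)
    (hφ : CMIntegrable (E.cm φ φ) (fun ω => ((‖f ω‖ ^ 2 : ℝ) : ℂ))) :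
    Integrable (fun ω => h ω * f ω) μ := by
  have hm := Hh.meas
  have hb : Integrable (fun ω => (b ω).re) μ := Hb.int.re
  refine ((E.integrable_sq hf Ha hφ).add hb).mono' (by fun_prop) ?_
  filter_upwards [E.ae_young Ha Hb Hh] with ω hω
  have := hω ‖f ω‖ 1
  rw [norm_mul]
  simp only [Pi.add_apply]
  nlinarith [mul_nonneg (norm_nonneg (f ω)) (norm_nonneg (h ω))]

lemma cmIntegrable {φ : H} (hf : Measurable f)
    (hφ : CMIntegrable (E.cm φ φ) (fun ω => ((‖f ω‖ ^ 2 : ℝ) : ℂ))) (ψ : H) :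
    CMIntegrable (E.cm ψ φ) f := by
  obtain ⟨μ, _, h⟩ := exists_common_dens [E.cm φ φ, E.cm ψ ψ, E.cm ψ φ]
  simp only [List.forall_mem_cons, List.not_mem_nil, false_imp_iff, implies_true, and_true] at h
  obtain ⟨⟨a, Ha⟩, ⟨b, Hb⟩, ⟨k, Hk⟩⟩ := h
  exact (Hk.integrable_iff hf).2 (E.integrable_dens_mul hf Ha Hb Hk hφ)

/-- The sharp bound `|∫ f dE_{ψ,φ}|² ≤ (∫ |f|² dE_{φ,φ}) ‖ψ‖²`. -/
lemma norm_cmIntegral_sq_le (hnorm : E.op Set.univ = 1) {φ : H} (hf : Measurable f)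
    (hφ : CMIntegrable (E.cm φ φ) (fun ω => ((‖f ω‖ ^ 2 : ℝ) : ℂ))) (ψ : H) :
    ‖cmIntegral (E.cm ψ φ) f‖ ^ 2 ≤
      (cmIntegral (E.cm φ φ) (fun ω => ((‖f ω‖ ^ 2 : ℝ) : ℂ))).re * ‖ψ‖ ^ 2 := by
  obtain ⟨μ, _, h⟩ := exists_common_dens [E.cm φ φ, E.cm ψ ψ, E.cm ψ φ]
  simp only [List.forall_mem_cons, List.not_mem_nil, false_imp_iff, implies_true, and_true] at h
  obtain ⟨⟨a, Ha⟩, ⟨b, Hb⟩, ⟨k, Hk⟩⟩ := h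
  have hi := E.integrable_dens_mul hf Ha Hb Hk hφ
  have hA := E.integrable_sq hf Ha hφ
  have hb : Integrable (fun ω => (b ω).re) μ := Hb.int.re
  rw [Hk.cmIntegral_eq hf (E.cmIntegrable hf hφ ψ), E.re_cmIntegral_sq hf Ha hφ]
  have hB : ∫ ω, (b ω).re ∂μ = ‖ψ‖ ^ 2 := by
    have h1 := Hb.re_apply Set.univ MeasurableSet.univ
    rw [setIntegral_univ] at h1
    have h2 : ComplexMeasure.re (E.cm ψ ψ) Set.univ = (E.cm ψ ψ Set.univ).re := rfl
    rw [← h1, h2, E.cm_apply _ _ _ MeasurableSet.univ, hnorm]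
    exact inner_self_eq_norm_sq (𝕜 := ℂ) ψ
  have hd := discrim_le_zero (K := ℝ) (a := ∫ ω, ‖f ω‖ ^ 2 * (a ω).re ∂μ)
    (b := -2 * ∫ ω, ‖k ω * f ω‖ ∂μ) (c := ‖ψ‖ ^ 2) (by
      intro s
      have : ∫ ω, 2 * s * ‖k ω * f ω‖ ∂μ ≤
          ∫ ω, (s ^ 2 * (‖f ω‖ ^ 2 * (a ω).re) + (b ω).re) ∂μ := by
        refine integral_mono_ae (hi.norm.const_mul _) ((hA.const_mul _).add hb) ?_
        filter_upwards [E.ae_young Ha Hb Hk] with ω hω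
        have := hω ‖f ω‖ s
        rw [norm_mul, mul_comm ‖k ω‖]
        exact this
      rw [integral_add (hA.const_mul _) hb, integral_const_mul, integral_const_mul, hB] at this
      linarith)
  rw [discrim] at hd
  have hn := norm_integral_le_integral_norm (μ := μ) (fun ω => k ω * f ω)
  have : ‖∫ ω, k ω * f ω ∂μ‖ ^ 2 ≤ (∫ ω, ‖k ω * f ω‖ ∂μ) ^ 2 := by gcongr
  linarith

lemma cmIntegral_add_left {φ : H} (hf : Measurable f)
    (hφ : CMIntegrable (E.cm φ φ) (fun ω => ((‖f ω‖ ^ 2 : ℝ) : ℂ))) (ψ₁ ψ₂ : H) :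
    cmIntegral (E.cm (ψ₁ + ψ₂) φ) f = cmIntegral (E.cm ψ₁ φ) f + cmIntegral (E.cm ψ₂ φ) f := by
  obtain ⟨μ, _, h⟩ := exists_common_dens [E.cm ψ₁ φ, E.cm ψ₂ φ]
  simp only [List.forall_mem_cons, List.not_mem_nil, false_imp_iff, implies_true, and_true] at h
  obtain ⟨⟨k₁, H₁⟩, ⟨k₂, H₂⟩⟩ := h
  have H₃ := H₁.add H₂
  rw [← cm_add_left] at H₃
  have i₁ := E.cmIntegrable hf hφ ψ₁
  have i₂ := E.cmIntegrable hf hφ ψ₂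
  rw [H₃.cmIntegral_eq hf (E.cmIntegrable hf hφ _), H₁.cmIntegral_eq hf i₁,
    H₂.cmIntegral_eq hf i₂,
    ← integral_add ((H₁.integrable_iff hf).1 i₁) ((H₂.integrable_iff hf).1 i₂)]
  simp only [add_mul]

lemma cmIntegral_smul_left {φ : H} (hf : Measurable f)
    (hφ : CMIntegrable (E.cm φ φ) (fun ω => ((‖f ω‖ ^ 2 : ℝ) : ℂ))) (c : ℂ) (ψ : H) :
    cmIntegral (E.cm (c • ψ) φ) f = conj c * cmIntegral (E.cm ψ φ) f := by
  obtain ⟨μ, _, h⟩ := exists_common_dens [E.cm ψ φ]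
  simp only [List.forall_mem_cons, List.not_mem_nil, false_imp_iff, implies_true, and_true] at h
  obtain ⟨k, Hk⟩ := h
  have H₃ := Hk.smul (conj c)
  rw [← cm_smul_left] at H₃
  rw [H₃.cmIntegral_eq hf (E.cmIntegrable hf hφ _),
    Hk.cmIntegral_eq hf (E.cmIntegrable hf hφ _), ← integral_const_mul]
  simp only [mul_assoc]

/-- The square integrability domain of `f` as a subspace of `H`. -/
def sqDomain (hf : Measurable f) : Submodule ℂ H where
  carrier := {φ | CMIntegrable (E.cm φ φ) (fun ω => ((‖f ω‖ ^ 2 : ℝ) : ℂ))}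
  zero_mem' := by
    have : IsDens (E.cm 0 0) (0 : Measure Ω) 0 := by
      refine ⟨measurable_const, integrable_zero _ _ _, fun X hX => ?_⟩
      simp [E.cm_apply _ _ X hX]
    exact (this.integrable_iff (by fun_prop)).2 (by simp)
  smul_mem' c φ hφ := by
    obtain ⟨μ, _, h⟩ := exists_common_dens [E.cm φ φ]
    obtain ⟨a, Ha⟩ := h (E.cm φ φ) (by simp)
    have H₃ := (Ha.smul (conj c)).smul c
    rw [← cm_smul_left, ← cm_smul_right] at H₃
    refine (H₃.integrable_iff (by fun_prop)).2 ?_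
    have := (Ha.integrable_iff (by fun_prop)).1 hφ
    simpa only [mul_assoc] using (this.const_mul (conj c)).const_mul c
  add_mem' {φ ψ} hφ hψ := by
    obtain ⟨μ, _, h⟩ := exists_common_dens [E.cm φ φ, E.cm ψ ψ, E.cm ψ φ, E.cm φ ψ]
    simp only [List.forall_mem_cons, List.not_mem_nil, false_imp_iff, implies_true,
      and_true] at h
    obtain ⟨⟨a, Ha⟩, ⟨b, Hb⟩, ⟨k, Hk⟩, ⟨l, Hl⟩⟩ := h
    have H₃ := (Ha.add Hl).add (Hk.add Hb)
    rw [← cm_add_right, ← cm_add_right, ← cm_add_left] at H₃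
    refine (H₃.integrable_iff (by fun_prop)).2 ?_
    have ia := (Ha.integrable_iff (by fun_prop)).1 hφ
    have ib := (Hb.integrable_iff (by fun_prop)).1 hψ
    -- The mixed densities are controlled by the arithmetic mean of the diagonal ones.
    have cross : ∀ {m : Ω → ℂ}, Measurable m →
        (∀ᵐ ω ∂μ, 2 * ‖m ω‖ ≤ (a ω).re + (b ω).re) →
        Integrable (fun ω => m ω * ((‖f ω‖ ^ 2 : ℝ) : ℂ)) μ := by
      intro m hm hle
      refine ((E.integrable_sq hf Ha hφ).add (E.integrable_sq hf Hb hψ)).mono'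
        (by fun_prop) ?_
      filter_upwards [hle] with ω hω
      rw [norm_mul, Complex.norm_real, Real.norm_of_nonneg (by positivity)]
      simp only [Pi.add_apply]
      nlinarith [mul_le_mul_of_nonneg_left hω (sq_nonneg ‖f ω‖),
        mul_nonneg (sq_nonneg ‖f ω‖) (norm_nonneg (m ω))]
    have ik := cross Hk.meas (by
      filter_upwards [E.ae_young Ha Hb Hk] with ω hω
      have := hω 1 1
      linarith)
    have il := cross Hl.meas (by
      filter_upwards [E.ae_young Hb Ha Hl] with ω hω
      have := hω 1 1
      linarith)
    refine ((ia.add il).add (ik.add ib)).congr (Eventually.of_forall fun ω => ?_)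
    simp only [Pi.add_apply]
    ring

/-- Riesz representation of the bounded conjugate-linear functional `ψ ↦ ∫ f dE_{ψ,φ}`. -/
lemma exists_vector [CompleteSpace H] (hnorm : E.op Set.univ = 1) {φ : H} (hf : Measurable f)
    (hφ : CMIntegrable (E.cm φ φ) (fun ω => ((‖f ω‖ ^ 2 : ℝ) : ℂ))) :
    ∃ v : H, ∀ ψ : H, ⟪ψ, v⟫ = cmIntegral (E.cm ψ φ) f := by
  set A := (cmIntegral (E.cm φ φ) (fun ω => ((‖f ω‖ ^ 2 : ℝ) : ℂ))).re with hA
  let L : H →ₗ[ℂ] ℂ :=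
    { toFun := fun ψ => conj (cmIntegral (E.cm ψ φ) f)
      map_add' := fun ψ₁ ψ₂ => by rw [E.cmIntegral_add_left hf hφ, map_add]
      map_smul' := fun c ψ => by
        rw [E.cmIntegral_smul_left hf hφ, map_mul, Complex.conj_conj]
        rfl }
  let L' : H →L[ℂ] ℂ := L.mkContinuous (√A) (fun ψ => by
    have h := E.norm_cmIntegral_sq_le hnorm hf hφ ψ
    change ‖conj (cmIntegral (E.cm ψ φ) f)‖ ≤ _
    rw [RCLike.norm_conj]
    have h2 := Real.le_sqrt_of_sq_le h
    rwa [Real.sqrt_mul' _ (sq_nonneg _), Real.sqrt_sq (norm_nonneg _)] at h2)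
  refine ⟨(InnerProductSpace.toDual ℂ H).symm L', fun ψ => ?_⟩
  rw [← inner_conj_symm, InnerProductSpace.toDual_symm_apply]
  change conj (conj (cmIntegral (E.cm ψ φ) f)) = _
  rw [Complex.conj_conj]

end POVM

theorem stmt_4 {Ω : Type*} [MeasurableSpace Ω] {H : Type*}
    [NormedAddCommGroup H] [InnerProductSpace ℂ H] [CompleteSpace H]
    (E : POVM Ω H) (hnorm : E.op Set.univ = 1) (f : Ω → ℂ) (hf : Measurable f) :
    let D : Set H := {φ | CMIntegrable (E.cm φ φ) (fun ω => ((‖f ω‖ ^ 2 : ℝ) : ℂ))}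
    (∃ S : Submodule ℂ H, (S : Set H) = D) ∧
    (∀ φ ∈ D, ∀ ψ : H, CMIntegrable (E.cm ψ φ) f) ∧
    (∀ φ ∈ D, ∃! v : H, ∀ ψ : H, ⟪ψ, v⟫ = cmIntegral (E.cm ψ φ) f) ∧
    (∀ φ ∈ D, ∀ v : H, (∀ ψ : H, ⟪ψ, v⟫ = cmIntegral (E.cm ψ φ) f) →
      ‖v‖ ^ 2 ≤ (cmIntegral (E.cm φ φ) (fun ω => ((‖f ω‖ ^ 2 : ℝ) : ℂ))).re) := by
  intro D
  refine ⟨⟨E.sqDomain hf, rfl⟩, fun φ hφ ψ => E.cmIntegrable hf hφ ψ, fun φ hφ => ?_,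
    fun φ hφ v hv => ?_⟩
  · obtain ⟨v, hv⟩ := E.exists_vector hnorm hf hφ
    exact ⟨v, hv, fun w hw => ext_inner_left ℂ fun ψ => (hw ψ).trans (hv ψ).symm⟩
  -- Testing the bound against `ψ = v` gives `‖v‖⁴ ≤ (∫ |f|² dE_{φ,φ}) ‖v‖²`.
  · have h := E.norm_cmIntegral_sq_le hnorm hf hφ v
    rw [← hv v, inner_self_eq_norm_sq_to_K, norm_pow, RCLike.norm_ofReal, abs_norm] at h
    rcases eq_or_ne v 0 with rfl | h0
    · obtain ⟨μ, _, hμ⟩ := exists_common_dens [E.cm φ φ]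
      obtain ⟨a, Ha⟩ := hμ (E.cm φ φ) (by simp)
      rw [E.re_cmIntegral_sq hf Ha hφ, norm_zero]
      refine le_trans (by simp) (integral_nonneg_of_ae ?_)
      filter_upwards [Ha.ae_re_nonneg (E.cm_self_nonneg φ)] with ω hω
      simp only [Pi.zero_apply]
      positivity
    · have hp : 0 < ‖v‖ ^ 2 := by positivity
      rw [sq (‖v‖ ^ 2)] at h
      exact le_of_mul_le_mul_right h hp
end

section
/- Let E be a positive sesquilinear form valued measure with form domain 𝒱 ⊆ H, f : Ω → ℂ a measurable function, and D_s ⊆ 𝒱 a linear subspace that is dense in H. Then W := {φ ∈ 𝒱 : f is E_{ψ,φ}-integrable for every ψ ∈ D_s, and there is a constant C_φ with |∫ f dE_{ψ,φ}| ≤ C_φ‖ψ‖ for all ψ ∈ D_s} is a linear subspace of H, and there is a unique linear map L_{D_s} : W → H such that ⟨ψ, L_{D_s}φ⟩ = ∫ f dE_{ψ,φ} for all φ ∈ W and ψ ∈ D_s. Moreover, if 𝒱 = H and E is a POVM, then every φ ∈ H such that f is E_{ψ,φ}-integrable for all ψ ∈ H belongs to W, and for such φ one has ⟨ψ, L_{D_s}φ⟩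 = ∫ f dE_{ψ,φ} for all ψ ∈ H; that is, L_{D_s} extends the maximal strong operator integral L(f,E). -/
/-!
The integral against a complex measure `ν` of a measurable, `ν`-integrable `f` is the limit of the
elementary sums `∑ c, c * ν (sₙ ⁻¹' {c})` along a sequence of simple functions `sₙ → f` with
`‖sₙ‖ ≤ 2 ‖f‖` that does not depend on `ν` (`tendsto_simpleSum`, dominated convergence). The sums
are linear in `ν`, hence so is the integral (`cmIntegral_add`, `cmIntegral_smul`), and integrability
passes to linear combinations because the variation is controlled by any measure dominating
`‖ν X‖` (`cmVariation_le`).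

Consequently, for `φ ∈ W` the map `ψ ↦ conj ∫ f dE_{ψ,φ}` is a bounded linear functional on `Ds`;
Hahn–Banach and the Riesz representation theorem give a vector `L φ`, unique since `Ds` is dense.
Uniqueness yields the linearity of `L`.

For a POVM, each elementary sum is of the form `⟪ψ, vₙ⟫` with `vₙ = ∑ c, c • E(sₙ ⁻¹' {c}) φ`. If `f`
is `E_{ψ,φ}`-integrable for all `ψ`, then `⟪ψ, vₙ⟫` converges for every `ψ`, and by the
Banach–Steinhaus theorem the limit `∫ f dE_{ψ,φ}` is `⟪ψ, w⟫` for some `w`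
(`exists_inner_eq_cmIntegral`). So `φ ∈ W` and `L φ = w`.
-/

open MeasureTheory ComplexConjugate Filter
open scoped ComplexInnerProductSpace ENNReal NNReal

/-- A positive sesquilinear form valued measure with form domain `V`:
`cm ψ φ` is the complex measure `E_{ψ,φ} : X ↦ [E(X)](ψ,φ)` for `ψ φ : V`. -/
structure PSFM (Ω : Type*) [MeasurableSpace Ω] {H : Type*} [NormedAddCommGroup H]
    [InnerProductSpace ℂ H] (V : Submodule ℂ H) where
  cm : V → V → MeasureTheory.ComplexMeasure Ω
  add_left : ∀ (ψ₁ ψ₂ φ : V), cm (ψ₁ + ψ₂) φ = cm ψ₁ φ + cm ψ₂ φ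
  smul_left : ∀ (c : ℂ) (ψ φ : V), cm (c • ψ) φ = (starRingEnd ℂ c) • cm ψ φ
  add_right : ∀ (ψ φ₁ φ₂ : V), cm ψ (φ₁ + φ₂) = cm ψ φ₁ + cm ψ φ₂
  smul_right : ∀ (c : ℂ) (ψ φ : V), cm ψ (c • φ) = c • cm ψ φ
  pos : ∀ (φ : V) (X : Set Ω), MeasurableSet X → 0 ≤ (cm φ φ X).re ∧ (cm φ φ X).im = 0

section Helpers

variable {Ω : Type*} [MeasurableSpace Ω]

/-- The elementary integral `∑ c, c * ν (s ⁻¹' {c})` of a simple function `s`. -/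
noncomputable def simpleSum (ν : ComplexMeasure Ω) (s : SimpleFunc Ω ℂ) : ℂ :=
  ∑ c ∈ s.range, c * ν (s ⁻¹' {c})

/-- Simple functions converging pointwise to `f` and bounded in norm by `2 ‖f‖`. -/
noncomputable def simpleApprox (f : Ω → ℂ) (hf : Measurable f) (n : ℕ) : SimpleFunc Ω ℂ :=
  SimpleFunc.approxOn f hf Set.univ 0 (Set.mem_univ 0) n

lemma enorm_le_cmVariation (ν : ComplexMeasure Ω) (X : Set Ω) : ‖ν X‖ₑ ≤ cmVariation ν X := by
  have h : ν X = ((ComplexMeasure.re ν X : ℝ) : ℂ) + ((ComplexMeasure.im ν X : ℝ) : ℂ) * Complex.I :=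
    (Complex.re_add_im (ν X)).symm
  calc ‖ν X‖ₑ ≤ ‖((ComplexMeasure.re ν X : ℝ) : ℂ)‖ₑ
        + ‖((ComplexMeasure.im ν X : ℝ) : ℂ) * Complex.I‖ₑ := by
        rw [h]; exact enorm_add_le _ _
    _ = ‖ComplexMeasure.re ν X‖ₑ + ‖ComplexMeasure.im ν X‖ₑ := by
        simp [← ofReal_norm]
    _ ≤ _ := by
        rw [cmVariation, Measure.add_apply]
        exact add_le_add (SignedMeasure.enorm_le_totalVariation _ _)
          (SignedMeasure.enorm_le_totalVariation _ _)

lemma cmVariation_le {ν : ComplexMeasure Ω} {μ : Measure Ω}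
    (h : ∀ X, MeasurableSet X → ‖ν X‖ₑ ≤ μ X) : cmVariation ν ≤ μ + μ := by
  rw [cmVariation, SignedMeasure.totalVariation_eq_variation,
    SignedMeasure.totalVariation_eq_variation]
  refine add_le_add (VectorMeasure.variation_le_of_forall_enorm_le fun X hX => ?_)
    (VectorMeasure.variation_le_of_forall_enorm_le fun X hX => ?_)
  · refine le_trans ?_ (h X hX)
    rw [enorm_le_iff_norm_le]
    exact Complex.abs_re_le_norm (ν X)
  · refine le_trans ?_ (h X hX)
    rw [enorm_le_iff_norm_le]
    exact Complex.abs_im_le_norm (ν X)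

lemma CMIntegrable.of_enorm_le {ν : ComplexMeasure Ω} {μ : Measure Ω} {f : Ω → ℂ}
    (hf : Integrable f μ) (h : ∀ X, MeasurableSet X → ‖ν X‖ₑ ≤ μ X) : CMIntegrable ν f :=
  (hf.add_measure hf).mono_measure (cmVariation_le h)

lemma CMIntegrable.add {ν₁ ν₂ : ComplexMeasure Ω} {f : Ω → ℂ} (h₁ : CMIntegrable ν₁ f)
    (h₂ : CMIntegrable ν₂ f) : CMIntegrable (ν₁ + ν₂) f := by
  refine CMIntegrable.of_enorm_le (Integrable.add_measure h₁ h₂) fun X _ => ?_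
  rw [add_apply, Measure.add_apply]
  exact (enorm_add_le _ _).trans
    (add_le_add (enorm_le_cmVariation ν₁ X) (enorm_le_cmVariation ν₂ X))

lemma CMIntegrable.smul {ν : ComplexMeasure Ω} {f : Ω → ℂ} (c : ℂ) (h : CMIntegrable ν f) :
    CMIntegrable (c • ν) f := by
  refine CMIntegrable.of_enorm_le (Integrable.smul_measure h (c := ‖c‖ₑ) (by simp)) fun X _ => ?_
  rw [smul_apply, Measure.smul_apply, enorm_smul]
  exact mul_le_mul_right (enorm_le_cmVariation ν X) _

lemma cmIntegral_simple (ν : ComplexMeasure Ω) (s : SimpleFunc Ω ℂ) :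
    cmIntegral ν s = simpleSum ν s := by
  have key : ∀ t : SignedMeasure Ω,
      smIntegral t s = ∑ c ∈ s.range, c * ((t (s ⁻¹' {c}) : ℝ) : ℂ) := by
    intro t
    rw [smIntegral, SimpleFunc.integral_eq_sum _ (SimpleFunc.integrable_of_isFiniteMeasure s),
      SimpleFunc.integral_eq_sum _ (SimpleFunc.integrable_of_isFiniteMeasure s),
      ← Finset.sum_sub_distrib]
    refine Finset.sum_congr rfl fun c _ => ?_
    rw [t.apply_eq_posPart_real_sub_negPart_real (s.measurableSet_fiber c)]
    simp only [Complex.real_smul]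
    push_cast
    ring
  rw [cmIntegral, key, key, simpleSum, Finset.mul_sum, ← Finset.sum_add_distrib]
  refine Finset.sum_congr rfl fun c _ => ?_
  have h : ν (s ⁻¹' {c}) = ((ComplexMeasure.re ν (s ⁻¹' {c}) : ℝ) : ℂ)
      + ((ComplexMeasure.im ν (s ⁻¹' {c}) : ℝ) : ℂ) * Complex.I :=
    (Complex.re_add_im (ν (s ⁻¹' {c}))).symm
  rw [h]
  ring

lemma tendsto_integral_simpleApprox {μ : Measure Ω} {f : Ω → ℂ} (hf : Measurable f)
    (h : Integrable f μ) :
    Tendsto (fun n => ∫ ω, simpleApprox f hf n ω ∂μ) atTop (nhds (∫ ω, f ω ∂μ)) := by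
  refine tendsto_integral_of_dominated_convergence (fun ω => ‖f ω‖ + ‖f ω‖)
    (fun n => (simpleApprox f hf n).aestronglyMeasurable) (h.norm.add h.norm)
    (fun n => .of_forall fun ω => SimpleFunc.norm_approxOn_zero_le hf _ ω n)
    (.of_forall fun ω => SimpleFunc.tendsto_approxOn hf _ (by simp))

/-- The approximating simple functions are the same for all complex measures `ν`, which is what
makes the integral linear in `ν`. -/
lemma tendsto_simpleSum {ν : ComplexMeasure Ω} {f : Ω → ℂ} (hf : Measurable f)
    (h : CMIntegrable ν f) :
    Tendsto (fun n => simpleSum ν (simpleApprox f hf n)) atTop (nhds (cmIntegral ν f)) := by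
  simp only [← cmIntegral_simple]
  have hre : Integrable f (ComplexMeasure.re ν).totalVariation := h.left_of_add_measure
  have him : Integrable f (ComplexMeasure.im ν).totalVariation := h.right_of_add_measure
  have key : ∀ t : SignedMeasure Ω, Integrable f t.totalVariation →
      Tendsto (fun n => smIntegral t (simpleApprox f hf n)) atTop (nhds (smIntegral t f)) :=
    fun t ht => (tendsto_integral_simpleApprox hf ht.left_of_add_measure).sub
      (tendsto_integral_simpleApprox hf ht.right_of_add_measure)
  exact (key _ hre).add ((key _ him).const_mul _)

lemma cmIntegral_add {ν₁ ν₂ : ComplexMeasure Ω} {f : Ω → ℂ} (hf : Measurable f)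
    (h₁ : CMIntegrable ν₁ f) (h₂ : CMIntegrable ν₂ f) :
    cmIntegral (ν₁ + ν₂) f = cmIntegral ν₁ f + cmIntegral ν₂ f := by
  refine tendsto_nhds_unique (tendsto_simpleSum hf (h₁.add h₂)) ?_
  refine ((tendsto_simpleSum hf h₁).add (tendsto_simpleSum hf h₂)).congr fun n => ?_
  simp only [simpleSum, add_apply, mul_add, Finset.sum_add_distrib]

lemma cmIntegral_smul {ν : ComplexMeasure Ω} {f : Ω → ℂ} (hf : Measurable f) (c : ℂ)
    (h : CMIntegrable ν f) : cmIntegral (c • ν) f = c * cmIntegral ν f := by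
  refine tendsto_nhds_unique (tendsto_simpleSum hf (h.smul c)) ?_
  refine ((tendsto_simpleSum hf h).const_mul c).congr fun n => ?_
  simp only [simpleSum, smul_apply, smul_eq_mul, Finset.mul_sum]
  exact Finset.sum_congr rfl fun x _ => by ring

variable {H : Type*} [NormedAddCommGroup H] [InnerProductSpace ℂ H] [CompleteSpace H]

/-- Banach–Steinhaus step: if the `ν ψ` arise from a fixed family of vectors `v X` and `f` is
integrable for all of them, then `ψ ↦ ∫ f dν_ψ` is represented by a vector. -/
lemma exists_inner_eq_cmIntegral {f : Ω → ℂ} (hf : Measurable f) (ν : H → ComplexMeasure Ω)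
    (v : Set Ω → H) (hv : ∀ ψ X, MeasurableSet X → ν ψ X = ⟪ψ, v X⟫)
    (h : ∀ ψ, CMIntegrable (ν ψ) f) : ∃ w : H, ∀ ψ, ⟪ψ, w⟫ = cmIntegral (ν ψ) f := by
  let u : ℕ → H := fun n =>
    ∑ c ∈ (simpleApprox f hf n).range, c • v (simpleApprox f hf n ⁻¹' {c})
  have hu : ∀ ψ n, ⟪ψ, u n⟫ = simpleSum (ν ψ) (simpleApprox f hf n) := by
    intro ψ n
    simp only [u, simpleSum, inner_sum, inner_smul_right]
    exact Finset.sum_congr rfl fun c _ => by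
      rw [hv ψ _ ((simpleApprox f hf n).measurableSet_fiber c)]
  have hlim : Tendsto (fun n ψ => innerSL ℂ (u n) ψ) atTop
      (nhds fun ψ => conj (cmIntegral (ν ψ) f)) := by
    rw [tendsto_pi_nhds]
    intro ψ
    refine ((Complex.continuous_conj.tendsto _).comp (tendsto_simpleSum hf (h ψ))).congr fun n => ?_
    simp only [Function.comp_apply, ← hu, innerSL_apply_apply]
    exact inner_conj_symm _ _
  let T : StrongDual ℂ H := continuousLinearMapOfTendsto (fun n => innerSL ℂ (u n)) hlim
  refine ⟨(InnerProductSpace.toDual ℂ H).symm T, fun ψ => ?_⟩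
  rw [← inner_conj_symm, InnerProductSpace.toDual_symm_apply]
  exact Complex.conj_conj _

/-- Riesz representation of a bounded antilinear functional given on a subspace only. -/
lemma exists_inner_eq_of_bound (D : Submodule ℂ H) (g : D → ℂ)
    (hadd : ∀ x y, g (x + y) = g x + g y) (hsmul : ∀ (c : ℂ) x, g (c • x) = conj c * g x)
    (C : ℝ) (hC : ∀ x : D, ‖g x‖ ≤ C * ‖(x : H)‖) : ∃ w : H, ∀ x : D, ⟪(x : H), w⟫ = g x := by
  let l : D →ₗ[ℂ] ℂ :=
    { toFun := fun x => conj (g x)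
      map_add' := fun x y => by rw [hadd, map_add]
      map_smul' := fun c x => by simp [hsmul] }
  obtain ⟨T, hT, -⟩ := exists_extension_norm_eq D
    (l.mkContinuous C fun x => by simpa [l] using hC x)
  refine ⟨(InnerProductSpace.toDual ℂ H).symm T, fun x => ?_⟩
  rw [← inner_conj_symm, InnerProductSpace.toDual_symm_apply, hT]
  exact Complex.conj_conj _

end Helpers

theorem stmt_5 {Ω : Type*} [MeasurableSpace Ω] {H : Type*}
    [NormedAddCommGroup H] [InnerProductSpace ℂ H] [CompleteSpace H]
    {V : Submodule ℂ H} (hVdense : Dense (V : Set H))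
    (E : PSFM Ω V) (f : Ω → ℂ) (hf : Measurable f)
    (Ds : Submodule ℂ H) (hsub : Ds ≤ V) (hdense : Dense (Ds : Set H)) :
    -- `P φ hφ` says that `φ ∈ W`, i.e. `f` is `E_{ψ,φ}`-integrable for all `ψ ∈ Ds` and the
    -- functional `ψ ↦ ∫ f dE_{ψ,φ}` is bounded on `Ds`
    let P : (φ : H) → φ ∈ V → Prop := fun φ hφ =>
      (∀ ψ (hψ : ψ ∈ Ds), CMIntegrable (E.cm ⟨ψ, hsub hψ⟩ ⟨φ, hφ⟩) f) ∧
      ∃ C : ℝ, ∀ ψ (hψ : ψ ∈ Ds), ‖cmIntegral (E.cm ⟨ψ, hsub hψ⟩ ⟨φ, hφ⟩) f‖ ≤ C * ‖ψ‖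
    -- W is a linear subspace of H
    (∃ S : Submodule ℂ H, (S : Set H) = {φ : H | ∃ hφ : φ ∈ V, P φ hφ}) ∧
    -- there is a unique linear map L on W with ⟨ψ, Lφ⟩ = ∫ f dE_{ψ,φ} for ψ ∈ Ds
    ∃ L : H → H,
      (∀ (φ : H) (hφ : φ ∈ V), P φ hφ → ∀ ψ (hψ : ψ ∈ Ds),
        ⟪ψ, L φ⟫ = cmIntegral (E.cm ⟨ψ, hsub hψ⟩ ⟨φ, hφ⟩) f) ∧
      (∀ (φ₁ φ₂ : H) (h₁ : φ₁ ∈ V) (h₂ : φ₂ ∈ V), P φ₁ h₁ → P φ₂ h₂ →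
        L (φ₁ + φ₂) = L φ₁ + L φ₂) ∧
      (∀ (c : ℂ) (φ : H) (hφ : φ ∈ V), P φ hφ → L (c • φ) = c • L φ) ∧
      (∀ L' : H → H,
        (∀ (φ : H) (hφ : φ ∈ V), P φ hφ → ∀ ψ (hψ : ψ ∈ Ds),
          ⟪ψ, L' φ⟫ = cmIntegral (E.cm ⟨ψ, hsub hψ⟩ ⟨φ, hφ⟩) f) →
        ∀ (φ : H) (hφ : φ ∈ V), P φ hφ → L' φ = L φ) ∧
      -- if V = H and E is a POVM, then L extends the maximal strong operator integral
      (∀ (hVtop : ∀ x : H, x ∈ V),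
        (∃ op : Set Ω → H →L[ℂ] H, ∀ (ψ φ : H) (X : Set Ω), MeasurableSet X →
          E.cm ⟨ψ, hVtop ψ⟩ ⟨φ, hVtop φ⟩ X = ⟪ψ, op X φ⟫) →
        ∀ φ : H, (∀ ψ : H, CMIntegrable (E.cm ⟨ψ, hVtop ψ⟩ ⟨φ, hVtop φ⟩) f) →
          P φ (hVtop φ) ∧
          ∀ ψ : H, ⟪ψ, L φ⟫ = cmIntegral (E.cm ⟨ψ, hVtop ψ⟩ ⟨φ, hVtop φ⟩) f) := by
  intro P
  have P_add : ∀ (φ₁ φ₂ : H) (h₁ : φ₁ ∈ V) (h₂ : φ₂ ∈ V), P φ₁ h₁ → P φ₂ h₂ →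
      P (φ₁ + φ₂) (V.add_mem h₁ h₂) := by
    rintro φ₁ φ₂ h₁ h₂ ⟨i₁, C₁, b₁⟩ ⟨i₂, C₂, b₂⟩
    refine ⟨fun ψ hψ => ?_, C₁ + C₂, fun ψ hψ => ?_⟩
    · have := (i₁ ψ hψ).add (i₂ ψ hψ)
      rwa [← E.add_right] at this
    · have := E.add_right ⟨ψ, hsub hψ⟩ ⟨φ₁, h₁⟩ ⟨φ₂, h₂⟩
      rw [AddMemClass.mk_add_mk] at this
      rw [this, cmIntegral_add hf (i₁ ψ hψ) (i₂ ψ hψ), add_mul]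
      exact (norm_add_le _ _).trans (add_le_add (b₁ ψ hψ) (b₂ ψ hψ))
  have P_smul : ∀ (c : ℂ) (φ : H) (h : φ ∈ V), P φ h → P (c • φ) (V.smul_mem c h) := by
    rintro c φ h ⟨i, C, b⟩
    refine ⟨fun ψ hψ => ?_, ‖c‖ * C, fun ψ hψ => ?_⟩
    · have := (i ψ hψ).smul c
      rwa [← E.smul_right] at this
    · have := E.smul_right c ⟨ψ, hsub hψ⟩ ⟨φ, h⟩
      rw [SetLike.mk_smul_mk] at this
      rw [this, cmIntegral_smul hf c (i ψ hψ), norm_mul, mul_assoc]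
      exact mul_le_mul_of_nonneg_left (b ψ hψ) (norm_nonneg c)
  have P_zero : P 0 V.zero_mem := by
    have h0 : ∀ ψ : V, E.cm ψ ⟨0, V.zero_mem⟩ = 0 := fun ψ => by
      have := E.add_right ψ 0 0
      rwa [add_zero, left_eq_add] at this
    have hi : CMIntegrable (0 : ComplexMeasure Ω) f :=
      CMIntegrable.of_enorm_le (integrable_zero_measure (f := f)) fun X _ => by simp
    refine ⟨fun ψ hψ => by rwa [h0], 0, fun ψ hψ => ?_⟩
    have := cmIntegral_add hf hi hi
    rw [add_zero, left_eq_add] at this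
    rw [h0, this]
    simp
  have exL : ∀ φ : H, ∃ w : H, ∀ hφ : φ ∈ V, P φ hφ → ∀ ψ (hψ : ψ ∈ Ds),
      ⟪ψ, w⟫ = cmIntegral (E.cm ⟨ψ, hsub hψ⟩ ⟨φ, hφ⟩) f := by
    intro φ
    by_cases h : ∃ hφ : φ ∈ V, P φ hφ
    · obtain ⟨hφ, i, C, b⟩ := h
      obtain ⟨w, hw⟩ := exists_inner_eq_of_bound Ds
        (fun ψ => cmIntegral (E.cm ⟨ψ, hsub ψ.2⟩ ⟨φ, hφ⟩) f)
        (fun x y => by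
          have := E.add_left ⟨x, hsub x.2⟩ ⟨y, hsub y.2⟩ ⟨φ, hφ⟩
          rw [AddMemClass.mk_add_mk] at this
          rw [← cmIntegral_add hf (i x x.2) (i y y.2), ← this]
          rfl)
        (fun c x => by
          have := E.smul_left c ⟨x, hsub x.2⟩ ⟨φ, hφ⟩
          rw [SetLike.mk_smul_mk] at this
          rw [← cmIntegral_smul hf _ (i x x.2), ← this]
          rfl)
        C (fun x => b x x.2)
      exact ⟨w, fun _ _ ψ hψ => hw ⟨ψ, hψ⟩⟩
    · exact ⟨0, fun hφ hP => (h ⟨hφ, hP⟩).elim⟩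
  choose L hL using exL
  refine ⟨⟨{ carrier := {φ : H | ∃ hφ : φ ∈ V, P φ hφ}
             add_mem' := fun {a b} ⟨ha, pa⟩ ⟨hb, pb⟩ => ⟨_, P_add a b ha hb pa pb⟩
             zero_mem' := ⟨_, P_zero⟩
             smul_mem' := fun c x ⟨hx, px⟩ => ⟨_, P_smul c x hx px⟩ }, rfl⟩,
    L, hL, ?_, ?_, ?_, ?_⟩
  · intro φ₁ φ₂ h₁ h₂ p₁ p₂
    refine hdense.eq_of_inner_right ℂ fun ψ hψ => ?_
    rw [inner_add_right, hL _ _ (P_add φ₁ φ₂ h₁ h₂ p₁ p₂) ψ hψ, hL _ _ p₁ ψ hψ, hL _ _ p₂ ψ hψ,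
      ← cmIntegral_add hf (p₁.1 ψ hψ) (p₂.1 ψ hψ), ← E.add_right]
    rfl
  · intro c φ h p
    refine hdense.eq_of_inner_right ℂ fun ψ hψ => ?_
    rw [inner_smul_right, hL _ _ (P_smul c φ h p) ψ hψ, hL _ _ p ψ hψ,
      ← cmIntegral_smul hf c (p.1 ψ hψ), ← E.smul_right]
    rfl
  · intro L' hL' φ h p
    exact hdense.eq_of_inner_right ℂ fun ψ hψ => by rw [hL' φ h p ψ hψ, hL φ h p ψ hψ]
  · rintro hVtop ⟨op, hop⟩ φ hφ
    obtain ⟨w, hw⟩ := exists_inner_eq_cmIntegral hf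
      (fun ψ => E.cm ⟨ψ, hVtop ψ⟩ ⟨φ, hVtop φ⟩) (fun X => op X φ)
      (fun ψ X hX => hop ψ φ X hX) hφ
    have p : P φ (hVtop φ) := by
      refine ⟨fun ψ _ => hφ ψ, ‖w‖, fun ψ hψ => ?_⟩
      rw [← hw ψ, mul_comm]
      exact norm_inner_le_norm ψ w
    have hLw : L φ = w := hdense.eq_of_inner_right ℂ fun ψ hψ => by
      rw [hL φ (hVtop φ) p ψ hψ, hw ψ]
    exact ⟨p, fun ψ => by rw [hLw, hw ψ]⟩
end

section
/- Let E : 𝒜 → L(H) be a POVM, f : Ω → ℂ measurable, and D_s ⊆ H a dense linear subspace. Let D := {φ ∈ H : f is E_{ψ,φ}-integrable for every ψ ∈ H} (the domain of the maximal strong operator integral) and W := {φ ∈ H : f is E_{ψ,φ}-integrable for every ψ ∈ D_s and the functional D_s ∋ ψ ↦ ∫ f dE_{ψ,φ} is bounded} (so D ⊆ W). Then D = W if and only if for every φ ∈ W and every sequence (X_n) in 𝒜 with X_{n+1} ⊆ X_n for all n and ⋂_n X_n = ∅, one has lim_{n→∞} sup{ ∫_{X_n} |f| d|E_{ψ,φ}|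 : ψ ∈ D_s, ‖ψ‖ ≤ 1 } = 0. -/
/-! For fixed `φ`, put `μ ψ = |f| d|E_{ψ,φ}|`. These measures depend sublinearly on `ψ`, and
`ψ ↦ μ ψ A` is lower semicontinuous for every measurable `A`, because variations are suprema of
finite sums of continuous functions of `ψ`. Membership of `φ` in `D` means that all the `μ ψ` are
finite, and then `ψ ↦ μ ψ Ω` is a lower semicontinuous seminorm on a complete space, hence bounded
by `M * ‖ψ‖` (`exists_weightedVar_univ_le`). In particular `D ⊆ W`.

If the continuity condition holds and `φ ∈ W`, it is applied to the sets `{|f| > n}`: for some `n`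
the masses `μ ψ {|f| > n}` are bounded on the unit ball of the dense subspace, by lower
semicontinuity also on the open unit ball of `H`, and on the complement `f` is bounded; so `φ ∈ D`
(`weightedVar_univ_lt_top_of_dense`).

Conversely, for `φ ∈ D` the masses `μ ψ (X n)` tend to `0` uniformly on the whole unit ball
(`tendsto_iSup_measure_zero`): a failure would give `δ > 0`, disjoint sets `A k` and vectors `ψ k`
of norm at most `1` with `μ (ψ k) (A k) ≥ δ`. Averaging `μ x (⋃ k < n, A k)` over all signed sums
`x = ± ψ 0 ± ⋯ ± ψ (n - 1)` gives at least `n * δ`, whereas by the parallelogram law the mean of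
`M * ‖x‖` is at most `M * √n`. -/

open MeasureTheory ComplexConjugate Filter
open scoped ComplexInnerProductSpace ENNReal NNReal

/-! ### Averaging over signs -/

/-- The average of `F` over the `2 ^ n` signed sums `± ψ 0 ± ψ 1 ± ⋯ ± ψ (n - 1)`. -/
noncomputable def signAvg {H : Type*} [AddCommGroup H] (ψ : ℕ → H) : ℕ → (H → ℝ) → ℝ
  | 0, F => F 0
  | n + 1, F => signAvg ψ n (fun x => (F (x + ψ n) + F (x - ψ n)) / 2)

theorem signAvg_mono {H : Type*} [AddCommGroup H] (ψ : ℕ → H) (n : ℕ) {F G : H → ℝ}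
    (h : ∀ x, F x ≤ G x) : signAvg ψ n F ≤ signAvg ψ n G := by
  induction n generalizing F G with
  | zero => exact h 0
  | succ n ih =>
    refine ih fun x => ?_
    have h₁ := h (x + ψ n)
    have h₂ := h (x - ψ n)
    linarith

theorem signAvg_affine {H : Type*} [AddCommGroup H] (ψ : ℕ → H) (n : ℕ) (F : H → ℝ) (a b : ℝ) :
    signAvg ψ n (fun x => a * F x + b) = a * signAvg ψ n F + b := by
  induction n generalizing F with
  | zero => rfl
  | succ n ih =>
    simp only [signAvg]
    rw [← ih]
    congr 1
    ext x
    ring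

theorem signAvg_sum {H : Type*} [AddCommGroup H] (ψ : ℕ → H) (n : ℕ) (s : Finset ℕ)
    (F : ℕ → H → ℝ) :
    signAvg ψ n (fun x => ∑ k ∈ s, F k x) = ∑ k ∈ s, signAvg ψ n (F k) := by
  induction n generalizing F with
  | zero => rfl
  | succ n ih =>
    simp only [signAvg]
    rw [← ih]
    congr 1
    ext x
    rw [← Finset.sum_add_distrib, Finset.sum_div]

/-- By the parallelogram law, the signed sums of `n` vectors of the unit ball of a Hilbert space
have mean square norm at most `n`. -/
theorem signAvg_norm_sq_le {H : Type*} [NormedAddCommGroup H] [InnerProductSpace ℂ H]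
    (ψ : ℕ → H) (hψ : ∀ k, ‖ψ k‖ ≤ 1) (n : ℕ) :
    signAvg ψ n (fun x => ‖x‖ ^ 2) ≤ n := by
  induction n with
  | zero => simp [signAvg]
  | succ n ih =>
    have key : signAvg ψ (n + 1) (fun x => ‖x‖ ^ 2)
        ≤ signAvg ψ n (fun x => 1 * ‖x‖ ^ 2 + 1) := by
      refine signAvg_mono ψ n fun x => ?_
      have h := parallelogram_law_with_norm ℂ x (ψ n)
      nlinarith [hψ n, norm_nonneg (ψ n)]
    rw [signAvg_affine] at key
    push_cast
    linarith

/-- A seminorm-like function averages over the signed sums to at least its value at any of the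
summands, by the triangle inequality for the pairs of sums `x + ψ n` and `x - ψ n`. -/
theorem le_signAvg {H : Type*} [AddCommGroup H] (ψ : ℕ → H) (q : H → ℝ)
    (hadd : ∀ x y, q (x + y) ≤ q x + q y) (hneg : ∀ x, q (-x) = q x)
    (htwo : ∀ x, q (x + x) = 2 * q x) {n k : ℕ} (hk : k < n) :
    q (ψ k) ≤ signAvg ψ n q := by
  induction n with
  | zero => exact absurd hk (Nat.not_lt_zero k)
  | succ n ih =>
    rcases Nat.lt_succ_iff_lt_or_eq.1 hk with h | rfl
    · refine (ih h).trans (signAvg_mono ψ n fun x => ?_)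
      have h₁ := hadd (x + ψ n) (x - ψ n)
      rw [add_add_sub_cancel, htwo] at h₁
      linarith
    · have h₀ := signAvg_affine ψ k (fun _ => 0) 0 (q (ψ k))
      simp only [zero_mul, zero_add] at h₀
      rw [← h₀]
      refine signAvg_mono ψ k fun x => ?_
      have h₁ := hadd (x + ψ k) (-(x - ψ k))
      rw [hneg, ← sub_eq_add_neg, add_sub_sub_cancel, htwo] at h₁
      linarith

/-! ### Uniform continuity from above -/

/-- Let `μ x` be measures depending sublinearly on a vector `x` of a Hilbert space, with total mass
bounded by a multiple of `‖x‖`. Then `μ x` is continuous from above at `∅`, uniformly for `x` in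
the unit ball. Otherwise there would be `δ > 0`, disjoint sets `A k` and unit ball vectors `ψ k`
with `μ (ψ k) (A k) > δ`; on average over the signed sums `x` of `n` of the `ψ k`, the mass
`μ x` of `⋃ k < n, A k` would be at least `n * δ`, but it is `O(√n)`. -/
theorem tendsto_iSup_measure_zero {Ω : Type*} [MeasurableSpace Ω] {H : Type*}
    [NormedAddCommGroup H] [InnerProductSpace ℂ H] (μ : H → Measure Ω)
    (hadd : ∀ x y, μ (x + y) ≤ μ x + μ y)
    (hsmul : ∀ (c : ℝ) x, μ (c • x) = ‖c‖₊ • μ x) (M : ℝ)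
    (hM : ∀ x, μ x Set.univ ≤ ENNReal.ofReal (M * ‖x‖)) {ι : Type*} (y : ι → H)
    (hy : ∀ i, ‖y i‖ ≤ 1) (X : ℕ → Set Ω) (hX : ∀ n, MeasurableSet (X n))
    (hanti : ∀ n, X (n + 1) ⊆ X n) (hempty : (⋂ n, X n) = ∅) :
    Tendsto (fun n => ⨆ i, μ (y i) (X n)) atTop (nhds 0) := by
  have hXanti : Antitone X := antitone_nat_of_succ_le hanti
  have hfin : ∀ x, IsFiniteMeasure (μ x) := fun x =>
    ⟨(hM x).trans_lt ENNReal.ofReal_lt_top⟩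
  have hsanti : Antitone (fun n => ⨆ i, μ (y i) (X n)) := fun m n hmn =>
    iSup_mono fun i => measure_mono (hXanti hmn)
  have hlim := tendsto_atTop_iInf hsanti
  suffices h0 : (⨅ n, ⨆ i, μ (y i) (X n)) = 0 by rwa [h0] at hlim
  by_contra hne
  obtain ⟨δ, hδ0, hδ⟩ := ENNReal.lt_iff_exists_nnreal_btwn.1 (pos_iff_ne_zero.2 hne)
  have hδ0' : (0 : ℝ) < δ := by exact_mod_cast hδ0
  -- A block `X n \ X m` on which some vector of the family has mass more than `δ`.
  have hstep : ∀ n, ∃ m, n < m ∧ ∃ i, (δ : ℝ≥0∞) < μ (y i) (X n \ X m) := by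
    intro n
    obtain ⟨i, hi⟩ := lt_iSup_iff.1 (hδ.trans_le (iInf_le _ n))
    have hun : (⋃ m, X n \ X m) = X n := by
      rw [← Set.sdiff_iInter, hempty, Set.sdiff_empty]
    have hmono : Monotone (fun m => X n \ X m) := fun a b hab =>
      Set.sdiff_subset_sdiff_right (hXanti hab)
    have ht := tendsto_measure_iUnion_atTop (μ := μ (y i)) hmono
    rw [hun] at ht
    obtain ⟨m, hm, hnm⟩ := ((ht.eventually (lt_mem_nhds hi)).and (eventually_gt_atTop n)).exists
    exact ⟨m, hnm, i, hm⟩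
  choose next hnext idx hidx using hstep
  let N : ℕ → ℕ := fun k => next^[k] 0
  have hN : ∀ k, N (k + 1) = next (N k) := fun k => Function.iterate_succ_apply' _ _ _
  have hNmono : StrictMono N := strictMono_nat_of_lt_succ fun k => by
    rw [hN]; exact hnext _
  let A : ℕ → Set Ω := fun k => X (N k) \ X (N (k + 1))
  let ψ : ℕ → H := fun k => y (idx (N k))
  have hAm : ∀ k, MeasurableSet (A k) := fun k => (hX _).diff (hX _)
  have hAlt : ∀ j k, j < k → Disjoint (A j) (A k) := fun j k hjk =>
    Set.disjoint_left.2 fun ω hj hk => hj.2 (hXanti (hNmono.monotone hjk) hk.1)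
  have hAd : Pairwise (Function.onFun Disjoint A) := fun j k hjk => by
    rcases lt_or_gt_of_ne hjk with h | h
    · exact hAlt j k h
    · exact (hAlt k j h).symm
  have hAψ : ∀ k, (δ : ℝ) ≤ (μ (ψ k)).real (A k) := by
    intro k
    have h := (hidx (N k)).le
    rw [← hN] at h
    exact ENNReal.toReal_mono (measure_ne_top _ _) h
  have hsum : ∀ n x, ∑ k ∈ Finset.range n, (μ x).real (A k) ≤ |M| * ‖x‖ := by
    intro n x
    rw [← measureReal_biUnion_finset (fun j _ k _ h => hAd h) (fun k _ => hAm k)]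
    refine (measureReal_mono (Set.subset_univ _)).trans ?_
    refine ENNReal.toReal_le_of_le_ofReal (by positivity) ((hM x).trans ?_)
    exact ENNReal.ofReal_le_ofReal (by gcongr; exact le_abs_self M)
  have hbound : ∀ n : ℕ, (n : ℝ) * δ ≤ δ / 2 * n + M ^ 2 / (2 * δ) := by
    intro n
    calc (n : ℝ) * δ = ∑ k ∈ Finset.range n, (δ : ℝ) := by simp
      _ ≤ ∑ k ∈ Finset.range n, signAvg ψ n (fun x => (μ x).real (A k)) := by
          refine Finset.sum_le_sum fun k hk => (hAψ k).trans ?_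
          refine le_signAvg ψ (fun x => (μ x).real (A k)) (fun x z => ?_) (fun x => ?_)
            (fun x => ?_) (Finset.mem_range.1 hk)
          · rw [← measureReal_add_apply]
            exact ENNReal.toReal_mono (measure_ne_top _ _) (hadd x z _)
          · have h := hsmul (-1) x
            rw [neg_one_smul, nnnorm_neg, nnnorm_one, one_smul] at h
            simp only [h]
          · have h := hsmul 2 x
            rw [two_smul] at h
            simp [h, measureReal_def]
      _ = signAvg ψ n (fun x => ∑ k ∈ Finset.range n, (μ x).real (A k)) :=
          (signAvg_sum _ _ _ _).symm
      _ ≤ signAvg ψ n (fun x => δ / 2 * ‖x‖ ^ 2 + M ^ 2 / (2 * δ)) := by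
          refine signAvg_mono _ _ fun x => (hsum n x).trans ?_
          have h := sq_nonneg (δ * ‖x‖ - |M|)
          rw [← sub_nonneg]
          have e : δ / 2 * ‖x‖ ^ 2 + M ^ 2 / (2 * δ) - |M| * ‖x‖
              = (δ * ‖x‖ - |M|) ^ 2 / (2 * δ) := by
            rw [← sq_abs M]; field_simp; ring
          rw [e]; positivity
      _ = δ / 2 * signAvg ψ n (fun x => ‖x‖ ^ 2) + M ^ 2 / (2 * δ) := signAvg_affine _ _ _ _ _
      _ ≤ δ / 2 * n + M ^ 2 / (2 * δ) := by
          gcongr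
          exact signAvg_norm_sq_le ψ (fun k => hy _) n
  obtain ⟨n, hn⟩ := exists_nat_gt (M ^ 2 / (2 * δ) / (δ / 2))
  rw [div_lt_iff₀ (by positivity)] at hn
  linarith [hbound n]

/-! ### The weighted variation measures of a POVM -/

/-- The measure `|f| d|E_{ψ,φ}|`, with `|E_{ψ,φ}|` taken as the sum of the variations of the real
and imaginary parts of `E_{ψ,φ}`. -/
noncomputable def weightedVar {Ω : Type*} [MeasurableSpace Ω] {H : Type*}
    [NormedAddCommGroup H] [InnerProductSpace ℂ H] (E : POVM Ω H) (f : Ω → ℂ) (φ ψ : H) :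
    Measure Ω :=
  (cmVariation (E.cm ψ φ)).withDensity fun ω => (‖f ω‖₊ : ℝ≥0∞)

section

variable {Ω : Type*} [MeasurableSpace Ω] {H : Type*}
  [NormedAddCommGroup H] [InnerProductSpace ℂ H]

theorem cmIntegrable_iff_weightedVar (E : POVM Ω H) {f : Ω → ℂ} (hf : Measurable f) (φ ψ : H) :
    CMIntegrable (E.cm ψ φ) f ↔ weightedVar E f φ ψ Set.univ < ∞ := by
  rw [weightedVar, withDensity_apply _ MeasurableSet.univ, Measure.restrict_univ]
  exact ⟨fun h => h.2, fun h => ⟨hf.aestronglyMeasurable, h⟩⟩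

instance (ν : ComplexMeasure Ω) : IsFiniteMeasure (cmVariation ν) := by
  unfold cmVariation; infer_instance

theorem cmVariation_eq (ν : ComplexMeasure Ω) :
    cmVariation ν = (ComplexMeasure.re ν).variation + (ComplexMeasure.im ν).variation := by
  simp only [cmVariation, SignedMeasure.totalVariation_eq_variation]

theorem cmVariation_add_le (ν ν' : ComplexMeasure Ω) :
    cmVariation (ν + ν') ≤ cmVariation ν + cmVariation ν' := by
  simp only [cmVariation_eq, map_add]
  refine (add_le_add VectorMeasure.variation_add_le VectorMeasure.variation_add_le).trans_eq ?_
  abel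

theorem cmVariation_smul (c : ℝ) (ν : ComplexMeasure Ω) :
    cmVariation (c • ν) = ‖c‖₊ • cmVariation ν := by
  simp only [cmVariation_eq, map_smul, VectorMeasure.variation_smul, smul_add]

theorem POVM.cm_add (E : POVM Ω H) (φ ψ ψ' : H) :
    E.cm (ψ + ψ') φ = E.cm ψ φ + E.cm ψ' φ := by
  ext X hX
  simp [E.cm_apply _ _ X hX]

theorem POVM.cm_smul (E : POVM Ω H) (φ ψ : H) (c : ℝ) :
    E.cm (c • ψ) φ = c • E.cm ψ φ := by
  ext X hX
  simp [E.cm_apply _ _ X hX]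

theorem weightedVar_add_le (E : POVM Ω H) (f : Ω → ℂ) (φ ψ ψ' : H) :
    weightedVar E f φ (ψ + ψ') ≤ weightedVar E f φ ψ + weightedVar E f φ ψ' := by
  simp only [weightedVar]
  rw [← withDensity_add_measure, E.cm_add]
  refine Measure.le_iff.2 fun X hX => ?_
  rw [withDensity_apply _ hX, withDensity_apply _ hX]
  exact lintegral_mono' (Measure.restrict_mono le_rfl (cmVariation_add_le _ _)) le_rfl

theorem weightedVar_smul (E : POVM Ω H) (f : Ω → ℂ) (φ ψ : H) (c : ℝ) :
    weightedVar E f φ (c • ψ) = ‖c‖₊ • weightedVar E f φ ψ := by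
  simp only [weightedVar]
  rw [E.cm_smul, cmVariation_smul]
  exact withDensity_smul_measure _ _

theorem lowerSemicontinuous_variation {Ω : Type*} [MeasurableSpace Ω] {H : Type*}
    [TopologicalSpace H] {s : H → SignedMeasure Ω}
    (hs : ∀ X, MeasurableSet X → Continuous fun ψ => s ψ X) {A : Set Ω} (hA : MeasurableSet A) :
    LowerSemicontinuous fun ψ => (s ψ).variation A := by
  intro ψ₀ a ha
  obtain ⟨P, hP₁, hP₂, hP₃, hP₄⟩ := (s ψ₀).exists_lt_sum_of_lt_variation hA ha
  have hc : Continuous fun ψ => ∑ p ∈ P, ‖s ψ p‖ₑ :=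
    continuous_finsetSum _ fun p hp => (hs p (hP₃ p hp)).enorm
  filter_upwards [hc.continuousAt.eventually (lt_mem_nhds hP₄)] with ψ hψ
  exact hψ.trans_le ((s ψ).le_variation hA hP₁ hP₂)

theorem lowerSemicontinuous_cmVariation (E : POVM Ω H) (φ : H) {A : Set Ω}
    (hA : MeasurableSet A) : LowerSemicontinuous fun ψ => cmVariation (E.cm ψ φ) A := by
  simp only [cmVariation_eq, Measure.add_apply]
  refine LowerSemicontinuous.add (lowerSemicontinuous_variation (fun X hX => ?_) hA)
    (lowerSemicontinuous_variation (fun X hX => ?_) hA)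
  · have : ∀ ψ, ComplexMeasure.re (E.cm ψ φ) X = (⟪ψ, E.op X φ⟫ : ℂ).re := fun ψ => by
      rw [← E.cm_apply _ _ X hX]; rfl
    simp only [this]
    fun_prop
  · have : ∀ ψ, ComplexMeasure.im (E.cm ψ φ) X = (⟪ψ, E.op X φ⟫ : ℂ).im := fun ψ => by
      rw [← E.cm_apply _ _ X hX]; rfl
    simp only [this]
    fun_prop

theorem lowerSemicontinuous_weightedVar (E : POVM Ω H) (f : Ω → ℂ) (φ : H) {A : Set Ω}
    (hA : MeasurableSet A) : LowerSemicontinuous fun ψ => weightedVar E f φ ψ A := by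
  simp only [weightedVar, withDensity_apply _ hA, lintegral_eq_nnreal]
  refine lowerSemicontinuous_iSup fun g => lowerSemicontinuous_iSup fun _ => ?_
  simp only [SimpleFunc.map_lintegral]
  refine lowerSemicontinuous_sum fun c _ => ?_
  simp only [Measure.restrict_apply (g.measurableSet_fiber c)]
  exact (ENNReal.continuous_const_mul ENNReal.coe_ne_top).comp_lowerSemicontinuous
    (lowerSemicontinuous_cmVariation E φ ((g.measurableSet_fiber c).inter hA))
    (fun _ _ h => mul_le_mul_right h _)

/-- The uniform boundedness principle: if `f` is integrable for all the measures `E_{ψ,φ}`, then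
`ψ ↦ ∫ |f| d|E_{ψ,φ}|` is a finite lower semicontinuous (real) seminorm on a complete space, hence
bounded. -/
theorem exists_weightedVar_univ_le [CompleteSpace H] (E : POVM Ω H) (f : Ω → ℂ) (φ : H)
    (h : ∀ ψ, weightedVar E f φ ψ Set.univ < ∞) :
    ∃ M : ℝ, 0 < M ∧ ∀ ψ, weightedVar E f φ ψ Set.univ ≤ ENNReal.ofReal (M * ‖ψ‖) := by
  let p : Seminorm ℝ H := Seminorm.of (fun ψ => (weightedVar E f φ ψ Set.univ).toReal)
    (fun ψ ψ' => by
      rw [← ENNReal.toReal_add (h ψ).ne (h ψ').ne]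
      exact ENNReal.toReal_mono (ENNReal.add_ne_top.2 ⟨(h ψ).ne, (h ψ').ne⟩)
        (weightedVar_add_le E f φ ψ ψ' _))
    (fun c ψ => by
      rw [weightedVar_smul]
      simp [Measure.smul_apply])
  have hp : LowerSemicontinuous p := by
    intro ψ a ha
    rcases lt_or_ge a 0 with ha0 | ha0
    · exact Eventually.of_forall fun x => ha0.trans_le (apply_nonneg p x)
    · have hlt : ENNReal.ofReal a < weightedVar E f φ ψ Set.univ :=
        (ENNReal.ofReal_lt_iff_lt_toReal ha0 (h ψ).ne).2 ha
      filter_upwards [lowerSemicontinuous_weightedVar E f φ MeasurableSet.univ ψ _ hlt] with x hx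
      exact (ENNReal.ofReal_lt_iff_lt_toReal ha0 (h x).ne).1 hx
  obtain ⟨M, hM0, hM⟩ :=
    p.bound_of_continuous_normedSpace (p.continuous_of_lowerSemicontinuous hp)
  exact ⟨M, hM0, fun ψ => (ENNReal.le_ofReal_iff_toReal_le (h ψ).ne (by positivity)).2 (hM ψ)⟩

theorem norm_smIntegral_le (s : SignedMeasure Ω) {f : Ω → ℂ}
    (hf : Integrable f s.totalVariation) :
    ‖smIntegral s f‖ ≤ ∫ ω, ‖f ω‖ ∂s.totalVariation := by
  rw [SignedMeasure.totalVariation] at hf ⊢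
  rw [integral_add_measure hf.norm.left_of_add_measure hf.norm.right_of_add_measure]
  exact (norm_sub_le _ _).trans
    (add_le_add (norm_integral_le_integral_norm _) (norm_integral_le_integral_norm _))

theorem norm_cmIntegral_le (ν : ComplexMeasure Ω) {f : Ω → ℂ} (hf : CMIntegrable ν f) :
    ‖cmIntegral ν f‖ ≤ ∫ ω, ‖f ω‖ ∂(cmVariation ν) := by
  rw [CMIntegrable, cmVariation] at hf
  rw [cmVariation, integral_add_measure hf.norm.left_of_add_measure hf.norm.right_of_add_measure]
  refine (norm_add_le _ _).trans (add_le_add (norm_smIntegral_le _ hf.left_of_add_measure) ?_)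
  rw [norm_mul, Complex.norm_I, one_mul]
  exact norm_smIntegral_le _ hf.right_of_add_measure

/-- The norm of `∫ f dE_{ψ,φ}` is at most the total mass of `|f| d|E_{ψ,φ}|`. -/
theorem norm_cmIntegral_le_weightedVar (E : POVM Ω H) {f : Ω → ℂ} (φ ψ : H)
    (h : CMIntegrable (E.cm ψ φ) f) :
    ‖cmIntegral (E.cm ψ φ) f‖ ≤ (weightedVar E f φ ψ Set.univ).toReal := by
  refine (norm_cmIntegral_le _ h).trans_eq ?_
  rw [weightedVar, withDensity_apply _ MeasurableSet.univ, Measure.restrict_univ]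
  exact integral_norm_eq_lintegral_enorm h.1

/-- If the masses `∫_A |f| d|E_{ψ,φ}|` are bounded for `ψ` in the unit ball of a dense subspace and
`f` is bounded off `A`, then `f` is integrable for all the measures `E_{ψ,φ}`. -/
theorem weightedVar_univ_lt_top_of_dense (E : POVM Ω H) (f : Ω → ℂ) (φ : H)
    (Ds : Submodule ℂ H) (hdense : Dense (Ds : Set H)) {A : Set Ω} (hA : MeasurableSet A)
    (c : ℝ≥0) (hc : ∀ ω ∈ Aᶜ, ‖f ω‖₊ ≤ c) (b : ℝ≥0∞) (hb : b < ∞)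
    (h : ∀ ψ ∈ Ds, ‖ψ‖ ≤ 1 → weightedVar E f φ ψ A ≤ b) (ψ : H) :
    weightedVar E f φ ψ Set.univ < ∞ := by
  have hball : ∀ x : H, ‖x‖ < 1 → weightedVar E f φ x A ≤ b := by
    intro x hx
    have hcl : IsClosed {x | weightedVar E f φ x A ≤ b} :=
      (lowerSemicontinuous_weightedVar E f φ hA).isClosed_preimage b
    have hx' : x ∈ closure (Metric.ball 0 1 ∩ (Ds : Set H)) :=
      hdense.open_subset_closure_inter Metric.isOpen_ball (by simpa using hx)
    refine closure_minimal ?_ hcl hx'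
    rintro z ⟨hz, hzD⟩
    exact h z hzD (mem_ball_zero_iff.1 hz).le
  have hpos : 0 < ‖ψ‖ + 1 := by positivity
  have hψA : weightedVar E f φ ψ A < ∞ := by
    have hx := hball ((‖ψ‖ + 1)⁻¹ • ψ) (by
      rw [norm_smul, norm_inv, Real.norm_of_nonneg hpos.le, inv_mul_lt_iff₀ hpos]
      linarith)
    have e : ψ = (‖ψ‖ + 1) • ((‖ψ‖ + 1)⁻¹ • ψ) := by
      rw [smul_smul, mul_inv_cancel₀ hpos.ne', one_smul]
    rw [e, weightedVar_smul, Measure.smul_apply]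
    exact ENNReal.mul_lt_top ENNReal.coe_lt_top (hx.trans_lt hb)
  have hψAc : weightedVar E f φ ψ Aᶜ < ∞ := by
    rw [weightedVar, withDensity_apply _ hA.compl]
    refine (setLIntegral_mono measurable_const
      (g := fun _ => (c : ℝ≥0∞)) fun ω hω => by exact_mod_cast hc ω hω).trans_lt ?_
    rw [setLIntegral_const]
    exact ENNReal.mul_lt_top ENNReal.coe_lt_top (measure_lt_top _ _)
  rw [← measure_add_measure_compl hA]
  exact ENNReal.add_lt_top.2 ⟨hψA, hψAc⟩

end

theorem stmt_6 {Ω : Type*} [MeasurableSpace Ω] {H : Type*}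
    [NormedAddCommGroup H] [InnerProductSpace ℂ H] [CompleteSpace H]
    (E : POVM Ω H) (f : Ω → ℂ) (hf : Measurable f)
    (Ds : Submodule ℂ H) (hdense : Dense (Ds : Set H)) :
    let W : Set H := {φ | (∀ ψ ∈ Ds, CMIntegrable (E.cm ψ φ) f) ∧
      ∃ C : ℝ, ∀ ψ ∈ Ds, ‖cmIntegral (E.cm ψ φ) f‖ ≤ C * ‖ψ‖}
    ({φ : H | ∀ ψ : H, CMIntegrable (E.cm ψ φ) f} = W ↔
      ∀ φ ∈ W, ∀ X : ℕ → Set Ω, (∀ n, MeasurableSet (X n)) →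
        (∀ n, X (n + 1) ⊆ X n) → (⋂ n, X n) = ∅ →
        Filter.Tendsto
          (fun n => ⨆ ψ : {ψ : H // ψ ∈ Ds ∧ ‖ψ‖ ≤ 1},
            ∫⁻ ω in X n, (‖f ω‖₊ : ℝ≥0∞) ∂(cmVariation (E.cm (ψ : H) φ)))
          Filter.atTop (nhds 0)) := by
  intro W
  constructor
  · intro hDW φ hφ X hX hanti hempty
    rw [← hDW] at hφ
    obtain ⟨M, -, hM⟩ := exists_weightedVar_univ_le E f φ fun ψ =>
      (cmIntegrable_iff_weightedVar E hf φ ψ).1 (hφ ψ)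
    have key := tendsto_iSup_measure_zero (weightedVar E f φ) (weightedVar_add_le E f φ)
      (fun c ψ => weightedVar_smul E f φ ψ c) M hM (fun ψ : {ψ : H // ψ ∈ Ds ∧ ‖ψ‖ ≤ 1} => (ψ : H))
      (fun ψ => ψ.2.2) X hX hanti hempty
    simpa only [weightedVar, withDensity_apply _ (hX _)] using key
  · intro hcond
    refine Set.Subset.antisymm (fun φ hφ => ⟨fun ψ _ => hφ ψ, ?_⟩) (fun φ hφ ψ => ?_)
    · obtain ⟨M, hM0, hM⟩ := exists_weightedVar_univ_le E f φ fun ψ =>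
        (cmIntegrable_iff_weightedVar E hf φ ψ).1 (hφ ψ)
      exact ⟨M, fun ψ _ => (norm_cmIntegral_le_weightedVar E φ ψ (hφ ψ)).trans
        (ENNReal.toReal_le_of_le_ofReal (by positivity) (hM ψ))⟩
    · -- The condition is applied to the superlevel sets of `|f|`.
      let X : ℕ → Set Ω := fun n => {ω | (n : ℝ≥0) < ‖f ω‖₊}
      have hX : ∀ n, MeasurableSet (X n) := fun n =>
        measurableSet_lt measurable_const hf.nnnorm
      have hanti : ∀ n, X (n + 1) ⊆ X n := fun n ω hω => by
        have h : (n : ℝ≥0) ≤ ((n + 1 : ℕ) : ℝ≥0) := by exact_mod_cast n.le_succ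
        exact h.trans_lt hω
      have hempty : (⋂ n, X n) = ∅ := by
        refine Set.eq_empty_of_forall_notMem fun ω hω => ?_
        obtain ⟨n, hn⟩ := exists_nat_gt ‖f ω‖₊
        exact lt_asymm hn (Set.mem_iInter.1 hω n)
      obtain ⟨n, hn⟩ := ((hcond φ hφ X hX hanti hempty).eventually
        (gt_mem_nhds (zero_lt_one' ℝ≥0∞))).exists
      rw [cmIntegrable_iff_weightedVar E hf]
      refine weightedVar_univ_lt_top_of_dense E f φ Ds hdense (hX n) n
        (fun ω hω => not_lt.1 hω) 1 ENNReal.one_lt_top (fun x hxD hx => ?_) ψ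
      rw [weightedVar, withDensity_apply _ (hX n)]
      exact (le_iSup (fun ψ : {ψ : H // ψ ∈ Ds ∧ ‖ψ‖ ≤ 1} =>
        ∫⁻ ω in X n, (‖f ω‖₊ : ℝ≥0∞) ∂(cmVariation (E.cm (ψ : H) φ))) ⟨x, hxD, hx⟩).trans hn.le
end

section
/- Let E : 𝒜 → L(H) be a POVM and f : Ω → ℂ measurable, and suppose D := {φ ∈ H : f is E_{ψ,φ}-integrable for every ψ ∈ H} is dense in H; for φ ∈ D let L(f,E)φ denote the unique vector with ⟨ψ, L(f,E)φ⟩ = ∫ f dE_{ψ,φ} for all ψ ∈ H. Then f is E_{ψ,φ}-integrable for all ψ, φ ∈ D, the functional D ∋ ψ ↦ ∫ f dE_{ψ,φ} is bounded for every φ ∈ D, and {φ ∈ D : the functional D ∋ ψ ↦ ∫ f dE_{ψ,φ} is bounded} = D; consequently the symmetric weak operator integral determined by the dense subspace D_s := D coincides with L(f,E). -/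
/-!
For `φ ∈ D` the functional `ψ ↦ ∫ f dE_{ψ,φ}` is represented by the vector `L φ`, so by
Cauchy–Schwarz it is bounded with constant `‖L φ‖`. Hence the boundedness condition does not shrink
`D`, and `T φ`, which represents the same functional on the dense set `D`, equals `L φ`.
-/

open MeasureTheory ComplexConjugate Filter
open scoped ComplexInnerProductSpace ENNReal NNReal

theorem stmt_8 {Ω : Type*} [MeasurableSpace Ω] {H : Type*}
    [NormedAddCommGroup H] [InnerProductSpace ℂ H] [CompleteSpace H]
    (E : POVM Ω H) (f : Ω → ℂ) (hf : Measurable f)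
    (hdense : Dense {φ : H | ∀ ψ : H, CMIntegrable (E.cm ψ φ) f})
    (L : H → H)
    (hL : ∀ φ ∈ {φ : H | ∀ ψ : H, CMIntegrable (E.cm ψ φ) f},
      ∀ ψ : H, ⟪ψ, L φ⟫ = cmIntegral (E.cm ψ φ) f) :
    let D : Set H := {φ : H | ∀ ψ : H, CMIntegrable (E.cm ψ φ) f}
    (∀ φ ∈ D, ∀ ψ ∈ D, CMIntegrable (E.cm ψ φ) f) ∧
    (∀ φ ∈ D, ∃ C : ℝ, ∀ ψ ∈ D, ‖cmIntegral (E.cm ψ φ) f‖ ≤ C * ‖ψ‖) ∧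
    ({φ ∈ D | ∃ C : ℝ, ∀ ψ ∈ D, ‖cmIntegral (E.cm ψ φ) f‖ ≤ C * ‖ψ‖} = D) ∧
    (∀ T : H → H,
      (∀ φ, (φ ∈ D ∧ ∃ C : ℝ, ∀ ψ ∈ D, ‖cmIntegral (E.cm ψ φ) f‖ ≤ C * ‖ψ‖) →
        ∀ ψ ∈ D, ⟪ψ, T φ⟫ = cmIntegral (E.cm ψ φ) f) →
      ∀ φ ∈ D, T φ = L φ) := by
  have hbdd : ∀ φ ∈ {φ : H | ∀ ψ : H, CMIntegrable (E.cm ψ φ) f},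
      ∃ C : ℝ, ∀ ψ ∈ {φ : H | ∀ ψ : H, CMIntegrable (E.cm ψ φ) f},
        ‖cmIntegral (E.cm ψ φ) f‖ ≤ C * ‖ψ‖ := by
    intro φ hφ
    refine ⟨‖L φ‖, fun ψ _ => ?_⟩
    rw [← hL φ hφ ψ, mul_comm]
    exact norm_inner_le_norm ψ (L φ)
  refine ⟨fun φ hφ ψ _ => hφ ψ, hbdd, ?_, ?_⟩
  · ext φ
    exact ⟨fun h => h.1, fun h => ⟨h, hbdd φ h⟩⟩
  · intro T hT φ hφ
    -- `T φ` and `L φ` have the same inner products with the dense set of integrable vectors.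
    refine hdense.eq_of_inner_right ℂ fun ψ hψ => ?_
    rw [hT φ ⟨hφ, hbdd φ hφ⟩ ψ hψ, hL φ hφ ψ]
end
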